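/- Let R be a Cohen–Macaulay finitely generated ℕ-graded k-algebra of Krull dimension d, I a homogeneous ideal with R/I of finite length, and x_1, …, x_d a homogeneous system of parameters of R of degrees δ_1, …, δ_d. For a finitely generated ℤ-graded R-module N of finite length let H_N(t) = Σ_j λ_k(N_j) t^j, and set χ_n(t) = Σ_{i=0}^{∞} (−1)^i H_{Tor_i^R(R/(x_1,…,x_d), R/I^{[p^n]})}(t). Then for every nonzero complex number y, the limit lim_{n→∞} χ_n(e^{−iy/p^n}) exists and F(R,R,I)(y) = (1/(δ_1 δ_2 ⋯ δ_d (iy)^d)) · lim_{n→∞} χ_n(e^{−iy/p^n}). -/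

import Mathlib

open Filter Complex

noncomputable section

/-- The Frobenius bracket power `I^{[q]}` of an ideal. -/
def bracketPow {R : Type*} [CommSemiring R] (I : Ideal R) (q : ℕ) : Ideal R :=
  Ideal.span ((fun x : R => x ^ q) '' (I : Set R))

/-- The map induced by an `R`-linear map on the quotients by `J • ⊤`. -/
def inducedQuot {R A B : Type*} [CommRing R] [AddCommGroup A] [Module R A]
    [AddCommGroup B] [Module R B] (J : Ideal R) (f : A →ₗ[R] B) :
    (A ⧸ (J • ⊤ : Submodule R A)) →ₗ[R] B ⧸ (J • ⊤ : Submodule R B) :=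
  Submodule.mapQ _ _ f (by
    rw [← Submodule.map_le_iff_le_comap, Submodule.map_smul'']
    exact Submodule.smul_mono le_rfl le_top)

/-- Degree-`j` cycles at spot `i` of `F_• ⧸ J F_•`. -/
def cyclesPiece (k : Type*) {R : Type*} [Field k] [CommRing R] [Algebra k R]
    (F : ℕ → Type) [∀ i, AddCommGroup (F i)] [∀ i, Module R (F i)]
    [∀ i, Module k (F i)] [∀ i, IsScalarTower k R (F i)]
    (ℱ : ∀ i, ℤ → Submodule k (F i))
    (dF : ∀ i, F (i + 1) →ₗ[R] F i)
    (J : Ideal R) (i : ℕ) (j : ℤ) : Submodule k (F i ⧸ (J • ⊤ : Submodule R (F i))) :=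
  match i with
  | 0 => (ℱ 0 j).map (((J • ⊤ : Submodule R (F 0)).mkQ).restrictScalars k)
  | (i' + 1) =>
      (ℱ (i' + 1) j).map (((J • ⊤ : Submodule R (F (i' + 1))).mkQ).restrictScalars k) ⊓
        (LinearMap.ker (inducedQuot J (dF i'))).restrictScalars k

/-- Degree-`j` boundaries at spot `i` of `F_• ⧸ J F_•`. -/
def boundariesPiece (k : Type*) {R : Type*} [Field k] [CommRing R] [Algebra k R]
    (F : ℕ → Type) [∀ i, AddCommGroup (F i)] [∀ i, Module R (F i)]
    [∀ i, Module k (F i)] [∀ i, IsScalarTower k R (F i)]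
    (ℱ : ∀ i, ℤ → Submodule k (F i))
    (dF : ∀ i, F (i + 1) →ₗ[R] F i)
    (J : Ideal R) (i : ℕ) (j : ℤ) : Submodule k (F i ⧸ (J • ⊤ : Submodule R (F i))) :=
  (ℱ i j).map (((J • ⊤ : Submodule R (F i)).mkQ).restrictScalars k) ⊓
    (LinearMap.range (inducedQuot J (dF i))).restrictScalars k

/-- `λ_k(Tor_i^R(M, R/J)_j)` computed from a graded free resolution of `M`. -/
def torPieceDim (k : Type*) {R : Type*} [Field k] [CommRing R] [Algebra k R]
    (F : ℕ → Type) [∀ i, AddCommGroup (F i)] [∀ i, Module R (F i)]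
    [∀ i, Module k (F i)] [∀ i, IsScalarTower k R (F i)]
    (ℱ : ∀ i, ℤ → Submodule k (F i))
    (dF : ∀ i, F (i + 1) →ₗ[R] F i)
    (J : Ideal R) (i : ℕ) (j : ℤ) : ℕ :=
  Module.finrank k (cyclesPiece k F ℱ dF J i j) -
    Module.finrank k (boundariesPiece k F ℱ dF J i j)

/-- `p^{-nd} Σ_{j∈ℤ} λ_k((R/I^{[pⁿ]})_j) e^{-iyj/pⁿ}`. -/
def FnGen (k : Type*) {R M : Type*} [Field k] [CommRing R] [Algebra k R]
    [AddCommGroup M] [Module R M] [Module k M] [IsScalarTower k R M]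
    (ℳ : ℤ → Submodule k M) (I : Ideal R) (p d n : ℕ) (y : ℂ) : ℂ :=
  (1 / (p : ℂ) ^ n) ^ d *
    ∑' j : ℤ, (Module.finrank k ((ℳ j).map
        (((bracketPow I (p ^ n) • ⊤ : Submodule R M)).mkQ.restrictScalars k)) : ℂ) *
      Complex.exp (-Complex.I * y * (j : ℂ) / (p : ℂ) ^ n)

section PD
open CategoryTheory

lemma fp_pd_X1 {R A B C : Type} [CommRing R] [AddCommGroup A] [AddCommGroup B] [AddCommGroup C]
    [Module R A] [Module R B] [Module R C] (f : A →ₗ[R] B) (g : B →ₗ[R] C)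
    (hf : Function.Injective f) (hg : Function.Surjective g) (h : Function.Exact f g) (n : ℕ)
    (h2 : HasProjectiveDimensionLT (ModuleCat.of R B) n)
    (h3 : HasProjectiveDimensionLT (ModuleCat.of R C) (n + 1)) :
    HasProjectiveDimensionLT (ModuleCat.of R A) n := by
  let S := ModuleCat.shortComplexOfCompEqZero f g h.linearMap_comp_eq_zero
  have hS : S.ShortExact :=
    { exact := ModuleCat.shortComplex_exact _ h
      mono_f := (ModuleCat.mono_iff_injective _).2 hf
      epi_g := (ModuleCat.epi_iff_surjective _).2 hg }
  exact hS.hasProjectiveDimensionLT_X₁ n h2 h3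

lemma fp_pd_X3 {R A B C : Type} [CommRing R] [AddCommGroup A] [AddCommGroup B] [AddCommGroup C]
    [Module R A] [Module R B] [Module R C] (f : A →ₗ[R] B) (g : B →ₗ[R] C)
    (hf : Function.Injective f) (hg : Function.Surjective g) (h : Function.Exact f g) (n : ℕ)
    (h2 : HasProjectiveDimensionLT (ModuleCat.of R A) n)
    (h3 : HasProjectiveDimensionLT (ModuleCat.of R B) (n + 1)) :
    HasProjectiveDimensionLT (ModuleCat.of R C) (n + 1) := by
  let S := ModuleCat.shortComplexOfCompEqZero f g h.linearMap_comp_eq_zero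
  have hS : S.ShortExact :=
    { exact := ModuleCat.shortComplex_exact _ h
      mono_f := (ModuleCat.mono_iff_injective _).2 hf
      epi_g := (ModuleCat.epi_iff_surjective _).2 hg }
  exact hS.hasProjectiveDimensionLT_X₃ n h2 h3

lemma fp_pd_proj {R A : Type} [CommRing R] [AddCommGroup A] [Module R A] :
    Module.Projective R A ↔ HasProjectiveDimensionLT (ModuleCat.of R A) 1 := by
  rw [IsProjective.iff_projective, projective_iff_hasProjectiveDimensionLT_one]

/-- chain of ideals cut out by a regular sequence -/
lemma fp_pd_chain {R : Type} [CommRing R] (d : ℕ) (X : ℕ → Ideal R) (u : ℕ → R)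
    (h0 : X 0 = ⊥) (hs : ∀ m < d, X (m + 1) = X m ⊔ Ideal.span {u m})
    (hr : ∀ m < d, ∀ r, u m * r ∈ X m → r ∈ X m) :
    ∀ m ≤ d, HasProjectiveDimensionLT (ModuleCat.of R (R ⧸ X m)) (m + 1) := by
  intro m
  induction m with
  | zero =>
    intro _
    rw [zero_add, ← fp_pd_proj, h0]
    exact Module.Projective.of_equiv (Submodule.quotEquivOfEqBot (⊥ : Submodule R R) rfl).symm
  | succ m ih =>
    intro hm
    have ih' := ih (by omega)
    have hle : X m ≤ X (m + 1) := by rw [hs m (by omega)]; exact le_sup_left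
    refine fp_pd_X3 (LinearMap.lsmul R (R ⧸ X m) (u m)) (Submodule.factor hle) ?_
      (Submodule.factor_surjective hle) ?_ (m + 1) ih'
        (hasProjectiveDimensionLT_of_ge _ (m + 1) (m + 1 + 1) (by omega))
    · rw [injective_iff_map_eq_zero]
      intro a
      obtain ⟨a, rfl⟩ := Submodule.mkQ_surjective _ a
      intro h
      simp only [LinearMap.lsmul_apply, Submodule.mkQ_apply, ← Submodule.Quotient.mk_smul,
        Submodule.Quotient.mk_eq_zero] at h ⊢
      exact hr m (by omega) a h
    · intro a
      obtain ⟨a, rfl⟩ := Submodule.mkQ_surjective _ a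
      have hfac : (Submodule.factor hle) (Submodule.Quotient.mk a) = 0 ↔ a ∈ X (m + 1) :=
        Submodule.Quotient.mk_eq_zero (X (m + 1))
      rw [Submodule.mkQ_apply]
      refine hfac.trans ?_
      constructor
      · intro h
        rw [hs m (by omega), Submodule.mem_sup] at h
        obtain ⟨b, hb, c, hc, rfl⟩ := h
        rw [Ideal.mem_span_singleton'] at hc
        obtain ⟨e, rfl⟩ := hc
        refine ⟨Submodule.Quotient.mk e, ?_⟩
        rw [LinearMap.lsmul_apply, ← Submodule.Quotient.mk_smul, Submodule.Quotient.eq]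
        have : u m • e - (b + e * u m) = -b := by simp [mul_comm]
        rw [this]; exact (X m).neg_mem hb
      · rintro ⟨e, he⟩
        obtain ⟨e, rfl⟩ := Submodule.mkQ_surjective _ e
        rw [LinearMap.lsmul_apply, Submodule.mkQ_apply, ← Submodule.Quotient.mk_smul,
          Submodule.Quotient.eq] at he
        have h1 := hle he
        have h2 : u m • e ∈ X (m + 1) := by
          rw [hs m (by omega)]
          exact Ideal.mul_mem_right _ _ (le_sup_right (a := X m) (Ideal.mem_span_singleton_self _))
        have := (X (m+1)).sub_mem h2 h1
        simpa using this

lemma fp_proj_range {R : Type} [CommRing R] (d : ℕ) {M : Type} [AddCommGroup M] [Module R M]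
    (hM : HasProjectiveDimensionLT (ModuleCat.of R M) (d + 1))
    (F : ℕ → Type) [∀ i, AddCommGroup (F i)] [∀ i, Module R (F i)]
    [∀ i, Module.Free R (F i)]
    (dF : ∀ i, F (i + 1) →ₗ[R] F i) (ε : F 0 →ₗ[R] M) (hεsurj : Function.Surjective ε)
    (hex0 : LinearMap.range (dF 0) = LinearMap.ker ε)
    (hex : ∀ i : ℕ, LinearMap.range (dF (i + 1)) = LinearMap.ker (dF i)) :
    ∀ i, d ≤ i → Module.Projective R (LinearMap.range (dF i)) := by
  have key : ∀ i, HasProjectiveDimensionLT (ModuleCat.of R (LinearMap.range (dF i))) (d - i + 1) := by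
    intro i
    induction i with
    | zero =>
      have h2 : HasProjectiveDimensionLT (ModuleCat.of R (F 0)) 1 := fp_pd_proj.1 inferInstance
      refine fp_pd_X1 (LinearMap.range (dF 0)).subtype ε (Submodule.injective_subtype _) hεsurj ?_ _
        (hasProjectiveDimensionLT_of_ge _ 1 _ (by omega))
        (hasProjectiveDimensionLT_of_ge _ (d+1) _ (by omega))
      rw [LinearMap.exact_iff, Submodule.range_subtype, hex0]
    | succ i ih =>
      have h2 : HasProjectiveDimensionLT (ModuleCat.of R (F (i+1))) 1 := fp_pd_proj.1 inferInstance
      refine fp_pd_X1 (LinearMap.range (dF (i+1))).subtype (dF i).rangeRestrict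
        (Submodule.injective_subtype _) (LinearMap.surjective_rangeRestrict _) ?_ _
        (hasProjectiveDimensionLT_of_ge _ 1 _ (by omega))
        (hasProjectiveDimensionLT_of_ge _ (d - i + 1) _ (by omega))
      rw [LinearMap.exact_iff, Submodule.range_subtype, hex, LinearMap.ker_rangeRestrict]
  intro i hi
  rw [fp_pd_proj]
  have := key i
  rwa [Nat.sub_eq_zero_of_le hi] at this

end PD

/-- a kernel with projective image is a direct summand -/
lemma fp_summand {R A B : Type} [CommRing R] [AddCommGroup A] [AddCommGroup B]
    [Module R A] [Module R B] (f : A →ₗ[R] B) (hf : Module.Projective R (LinearMap.range f))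
    (J : Ideal R) : (J • ⊤ : Submodule R A) ⊓ LinearMap.ker f ≤ J • LinearMap.ker f := by
  obtain ⟨s, hs⟩ := Module.projective_lifting_property f.rangeRestrict LinearMap.id
    (LinearMap.surjective_rangeRestrict f)
  let π : A →ₗ[R] A := LinearMap.id - s ∘ₗ f.rangeRestrict
  have h1 : ∀ z ∈ LinearMap.ker f, π z = z := by
    intro z hz
    have : f.rangeRestrict z = 0 := by
      rw [← LinearMap.mem_ker, LinearMap.ker_rangeRestrict]; exact hz
    simp [π, this]
  have h2 : LinearMap.range π ≤ LinearMap.ker f := by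
    rintro _ ⟨z, rfl⟩
    have := congrArg (fun g => ((g (f.rangeRestrict z) : LinearMap.range f) : B)) hs
    simp at this
    simp [π, this]
  rintro z ⟨hz, hz'⟩
  rw [← h1 z hz']
  have : π z ∈ (J • ⊤ : Submodule R A).map π := Submodule.mem_map_of_mem hz
  rw [Submodule.map_smul'', Submodule.map_top] at this
  exact Submodule.smul_mono le_rfl h2 this

section Graded

/-- projection to the degree `t` piece -/
def fpr {k F : Type} [Field k] [AddCommGroup F] [Module k F] (ℱ : ℤ → Submodule k F)
    [DirectSum.Decomposition ℱ] (t : ℤ) : F →ₗ[k] F :=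
  (ℱ t).subtype ∘ₗ DirectSum.component k ℤ (fun i => ℱ i) t ∘ₗ
    (DirectSum.decomposeLinearEquiv ℱ).toLinearMap

section basic
variable {k F : Type} [Field k] [AddCommGroup F] [Module k F] (ℱ : ℤ → Submodule k F)
    [DirectSum.Decomposition ℱ]

lemma fpr_apply (t : ℤ) (z : F) : fpr ℱ t z = (DirectSum.decompose ℱ z t : F) := rfl

lemma fpr_mem (t : ℤ) (z : F) : fpr ℱ t z ∈ ℱ t := by
  rw [fpr_apply]; exact Subtype.property _

lemma fpr_of_mem {t : ℤ} {z : F} (h : z ∈ ℱ t) : fpr ℱ t z = z := by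
  rw [fpr_apply, DirectSum.decompose_of_mem_same ℱ h]

lemma fpr_of_ne {s t : ℤ} {z : F} (h : z ∈ ℱ s) (hst : s ≠ t) : fpr ℱ t z = 0 := by
  rw [fpr_apply, DirectSum.decompose_of_mem_ne ℱ h hst]

lemma fpr_sum (z : F) : ∃ S : Finset ℤ, (∑ t ∈ S, fpr ℱ t z) = z ∧ ∀ t ∉ S, fpr ℱ t z = 0 := by
  classical
  refine ⟨(DirectSum.decompose ℱ z).support, ?_, ?_⟩
  · exact DirectSum.sum_support_decompose ℱ z
  · intro t ht
    rw [fpr_apply]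
    simpa using ht

lemma fpr_ext {z : F} (h : ∀ t, fpr ℱ t z = 0) : z = 0 := by
  obtain ⟨S, hS, _⟩ := fpr_sum ℱ z
  rw [← hS]
  exact Finset.sum_eq_zero fun t _ => h t

lemma fpr_induction {P : F → Prop} (z : F) (h0 : P 0) (hadd : ∀ a b, P a → P b → P (a + b))
    (hh : ∀ t, ∀ a ∈ ℱ t, P a) : P z := by
  obtain ⟨S, hS, _⟩ := fpr_sum ℱ z
  rw [← hS]
  exact Finset.sum_induction _ P hadd h0 fun t _ => hh t _ (fpr_mem ℱ t z)

/-- degree preserving maps commute with projections -/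
lemma fpr_comm {G : Type} [AddCommGroup G] [Module k G] (𝒢 : ℤ → Submodule k G)
    [DirectSum.Decomposition 𝒢] (f : F →+ G) (hf : ∀ t, ∀ z ∈ ℱ t, f z ∈ 𝒢 t) (t : ℤ) (z : F) :
    fpr 𝒢 t (f z) = f (fpr ℱ t z) := by
  refine fpr_induction ℱ (P := fun z => fpr 𝒢 t (f z) = f (fpr ℱ t z)) z (by simp)
    (fun a b ha hb => by simp [map_add, ha, hb]) ?_
  intro s a ha
  by_cases hst : s = t
  · subst hst
    rw [fpr_of_mem _ ha, fpr_of_mem _ (hf _ _ ha)]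
  · rw [fpr_of_ne _ ha hst, fpr_of_ne _ (hf _ _ ha) hst, map_zero]

end basic

variable {k R : Type} [Field k] [CommRing R] [Algebra k R]
    (𝒜 : ℤ → Submodule k R) [GradedAlgebra 𝒜]
    {F : Type} [AddCommGroup F] [Module R F] [Module k F] [IsScalarTower k R F]
    (ℱ : ℤ → Submodule k F) [DirectSum.Decomposition ℱ]

lemma fpr_smul (hℱ : ∀ (a b : ℤ), ∀ r ∈ 𝒜 a, ∀ z ∈ ℱ b, r • z ∈ ℱ (a + b))
    {b : ℤ} {e : F} (he : e ∈ ℱ b) (t : ℤ) (c : R) :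
    fpr ℱ t (c • e) = fpr 𝒜 (t - b) c • e := by
  refine fpr_induction 𝒜 (P := fun c => fpr ℱ t (c • e) = fpr 𝒜 (t - b) c • e) c (by simp)
    (fun a b ha hb => by simp [add_smul, ha, hb]) ?_
  intro s a ha
  have h1 := hℱ s b a ha e he
  by_cases hst : s = t - b
  · have : s + b = t := by omega
    rw [this] at h1
    rw [fpr_of_mem _ h1, ← hst, fpr_of_mem _ ha]
  · rw [fpr_of_ne _ h1 (by omega), fpr_of_ne _ ha hst, zero_smul]

lemma fpr_smul_top (hℱ : ∀ (a b : ℤ), ∀ r ∈ 𝒜 a, ∀ z ∈ ℱ b, r • z ∈ ℱ (a + b))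
    (J : Ideal R) (hJ : ∀ t, ∀ r ∈ J, fpr 𝒜 t r ∈ J) (t : ℤ) (z : F)
    (hz : z ∈ (J • ⊤ : Submodule R F)) : fpr ℱ t z ∈ (J • ⊤ : Submodule R F) := by
  refine Submodule.smul_induction_on (p := fun z => fpr ℱ t z ∈ (J • ⊤ : Submodule R F)) hz ?_ ?_
  · intro r hr n _
    refine fpr_induction ℱ (P := fun n => fpr ℱ t (r • n) ∈ (J • ⊤ : Submodule R F)) n (by simp) ?_ ?_
    · intro a b ha hb
      rw [smul_add, map_add]; exact add_mem ha hb
    · intro s a ha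
      rw [fpr_smul 𝒜 ℱ hℱ ha]
      exact Submodule.smul_mem_smul (hJ _ _ hr) trivial
  · intro a b ha hb
    rw [map_add]; exact add_mem ha hb

/-- elements of degrees at least `N` -/
def fpU (N : ℤ) : Submodule k R := ⨆ t : {t : ℤ // N ≤ t}, 𝒜 t

lemma fpU_mem {N : ℤ} {c : R} (h : ∀ t, t < N → fpr 𝒜 t c = 0) : c ∈ fpU 𝒜 N := by
  obtain ⟨S, hS, _⟩ := fpr_sum 𝒜 c
  rw [← hS]
  refine Submodule.sum_mem _ fun t _ => ?_
  by_cases ht : t < N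
  · rw [h t ht]; exact zero_mem _
  · exact Submodule.mem_iSup_of_mem (p := fun t : {t : ℤ // N ≤ t} => 𝒜 t)
      ⟨t, not_lt.1 ht⟩ (fpr_mem 𝒜 t c)

lemma fpU_zero {N : ℤ} {c : R} (h : c ∈ fpU 𝒜 N) (t : ℤ) (ht : t < N) : fpr 𝒜 t c = 0 := by
  have : fpU 𝒜 N ≤ LinearMap.ker (fpr 𝒜 t) := by
    refine iSup_le fun s => ?_
    intro a ha
    have := s.2
    exact fpr_of_ne 𝒜 ha (by omega)
  exact this h

lemma fpU_mul {M N : ℤ} {a b : R} (ha : a ∈ fpU 𝒜 M) (hb : b ∈ fpU 𝒜 N) :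
    a * b ∈ fpU 𝒜 (M + N) := by
  have : fpU 𝒜 M * fpU 𝒜 N ≤ fpU 𝒜 (M + N) := by
    unfold fpU
    rw [Submodule.iSup_mul]
    refine iSup_le fun s => ?_
    rw [Submodule.mul_iSup]
    refine iSup_le fun t => ?_
    rw [Submodule.mul_le]
    intro x hx y hy
    exact Submodule.mem_iSup_of_mem (p := fun t : {t : ℤ // M + N ≤ t} => 𝒜 t)
      ⟨s + t, add_le_add s.2 t.2⟩ (SetLike.mul_mem_graded hx hy)
  exact this (Submodule.mul_mem_mul ha hb)

/-- finitely generated graded projectives are graded free -/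
lemma fp_graded_basis [IsNoetherianRing R] [Module.Finite R F]
    (h𝒜neg : ∀ t : ℤ, t < 0 → 𝒜 t = ⊥)
    (h𝒜zero : ∀ x ∈ 𝒜 0, ∃ c : k, algebraMap k R c = x)
    (hℱ : ∀ (a b : ℤ), ∀ r ∈ 𝒜 a, ∀ z ∈ ℱ b, r • z ∈ ℱ (a + b))
    (Z : Submodule R F) (hZ : ∀ t, ∀ z ∈ Z, fpr ℱ t z ∈ Z) (hproj : Module.Projective R Z) :
    ∃ (r : ℕ) (e : Fin r → F) (a : Fin r → ℤ), (∀ i, e i ∈ ℱ (a i)) ∧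
      LinearIndependent R e ∧ Submodule.span R (Set.range e) = Z := by
  classical
  have hex : ∃ r : ℕ, ∃ (e : Fin r → F) (a : Fin r → ℤ), (∀ i, e i ∈ ℱ (a i)) ∧
      Submodule.span R (Set.range e) = Z := by
    obtain ⟨s, hs⟩ : Z.FG := IsNoetherian.noetherian Z
    choose S hS hS' using fun z : F => fpr_sum ℱ z
    let T : Finset (F × ℤ) := s.biUnion fun z => (S z).image fun t => (fpr ℱ t z, t)
    have hT : ∀ q ∈ T, q.1 ∈ ℱ q.2 ∧ q.1 ∈ Z := by
      intro q hq
      simp only [T, Finset.mem_biUnion, Finset.mem_image] at hq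
      obtain ⟨z, hz, t, ht, rfl⟩ := hq
      refine ⟨fpr_mem _ _ _, hZ _ _ ?_⟩
      rw [← hs]; exact Submodule.subset_span hz
    refine ⟨T.card, fun i => ((T.equivFin.symm i : T) : F × ℤ).1,
      fun i => ((T.equivFin.symm i : T) : F × ℤ).2, fun i => (hT _ (Subtype.property _)).1, ?_⟩
    apply le_antisymm
    · rw [Submodule.span_le]
      rintro _ ⟨i, rfl⟩
      exact (hT _ (Subtype.property _)).2
    · rw [← hs, Submodule.span_le]
      intro z hz
      rw [← hS z]
      refine Submodule.sum_mem _ fun t ht => Submodule.subset_span ?_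
      have hm : (fpr ℱ t z, t) ∈ T := by
        simp only [T, Finset.mem_biUnion, Finset.mem_image]
        exact ⟨z, hz, t, ht, rfl⟩
      exact ⟨T.equivFin ⟨_, hm⟩, by simp⟩
  obtain ⟨r, ⟨e, a, hea, hspan⟩, hmin⟩ : ∃ r : ℕ, (∃ (e : Fin r → F) (a : Fin r → ℤ),
      (∀ i, e i ∈ ℱ (a i)) ∧ Submodule.span R (Set.range e) = Z) ∧ ∀ r' < r,
      ¬ (∃ (e : Fin r' → F) (a : Fin r' → ℤ), (∀ i, e i ∈ ℱ (a i)) ∧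
      Submodule.span R (Set.range e) = Z) :=
    ⟨Nat.find hex, Nat.find_spec hex, fun r' h => Nat.find_min hex h⟩
  refine ⟨r, e, a, hea, ?_, hspan⟩
  -- relations have no unit coefficients
  have claim1 : ∀ c : Fin r → R, ∑ i, c i • e i = 0 → ∀ i, c i ∈ fpU 𝒜 1 := by
    intro c hc i
    by_contra hci
    have h0 : fpr 𝒜 0 (c i) ≠ 0 := by
      intro h0
      apply hci
      apply fpU_mem
      intro t ht
      rcases (by omega : t < 0 ∨ t = 0) with h | h
      · have := fpr_mem 𝒜 t (c i)
        rwa [h𝒜neg t h, Submodule.mem_bot] at this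
      · rw [h, h0]
    obtain ⟨u, hu⟩ := h𝒜zero _ (fpr_mem 𝒜 0 (c i))
    have hu0 : u ≠ 0 := by
      rintro rfl
      rw [map_zero] at hu
      exact h0 hu.symm
    have hrel := congrArg (fpr ℱ (a i)) hc
    rw [map_zero, map_sum] at hrel
    simp only [fun l => fpr_smul 𝒜 ℱ hℱ (hea l) (a i) (c l)] at hrel
    obtain ⟨r', rfl⟩ : ∃ r', r = r' + 1 := by
      have := i.2
      exact ⟨r - 1, by omega⟩
    rw [Fin.sum_univ_succAbove _ i, sub_self, ← hu] at hrel
    have hei : e i ∈ Submodule.span R (Set.range (e ∘ i.succAbove)) := by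
      have h1 : algebraMap k R u • e i ∈ Submodule.span R (Set.range (e ∘ i.succAbove)) := by
        rw [eq_neg_of_add_eq_zero_left hrel]
        refine Submodule.neg_mem _ (Submodule.sum_mem _ fun l _ => Submodule.smul_mem _ _ ?_)
        exact Submodule.subset_span ⟨l, rfl⟩
      have h2 := Submodule.smul_mem _ (algebraMap k R u⁻¹) h1
      rwa [smul_smul, ← map_mul, inv_mul_cancel₀ hu0, map_one, one_smul] at h2
    refine hmin r' (by omega) ⟨e ∘ i.succAbove, a ∘ i.succAbove, fun l => hea _, ?_⟩
    rw [← hspan]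
    apply le_antisymm
    · exact Submodule.span_mono (Set.range_comp_subset_range _ _)
    · rw [Submodule.span_le]
      rintro _ ⟨l, rfl⟩
      by_cases hl : l = i
      · rw [hl]; exact hei
      · obtain ⟨l', rfl⟩ := Fin.exists_succAbove_eq hl
        exact Submodule.subset_span ⟨l', rfl⟩
  -- splitting
  let φ : (Fin r → R) →ₗ[R] Z := (Fintype.linearCombination R e).codRestrict Z (by
    intro c
    rw [← hspan, ← Fintype.range_linearCombination]
    exact ⟨c, rfl⟩)
  have hφ : ∀ c, (φ c : F) = ∑ i, c i • e i := fun c => by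
    simp [φ, Fintype.linearCombination_apply]
  have hφs : Function.Surjective φ := by
    rintro ⟨z, hz⟩
    rw [← hspan, ← Fintype.range_linearCombination] at hz
    obtain ⟨c, hc⟩ := hz
    exact ⟨c, Subtype.ext hc⟩
  obtain ⟨s, hs⟩ := Module.projective_lifting_property φ LinearMap.id hφs
  let π : (Fin r → R) →ₗ[R] (Fin r → R) := LinearMap.id - s ∘ₗ φ
  have hπ : ∀ c, φ (π c) = 0 := by
    intro c
    have := congrArg (fun g => g (φ c)) hs
    simp at this
    simp [π, this]
  have hπ' : ∀ c, φ c = 0 → π c = c := by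
    intro c hc
    simp [π, hc]
  have hK : ∀ c, φ c = 0 ↔ ∑ i, c i • e i = 0 := by
    intro c
    rw [← hφ]; simp
  have claim2 : ∀ N : ℕ, ∀ c, φ c = 0 → ∀ i, c i ∈ fpU 𝒜 (N : ℤ) := by
    intro N
    induction N with
    | zero =>
      intro c hc i
      apply fpU_mem
      intro t ht
      have := fpr_mem 𝒜 t (c i)
      rwa [h𝒜neg t (by simpa using ht), Submodule.mem_bot] at this
    | succ N ih =>
      intro c hc i
      have h1 : c = ∑ l, c l • π (Pi.single l 1) := by
        conv_lhs => rw [← hπ' c hc, ← Finset.univ_sum_single c, map_sum]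
        refine Finset.sum_congr rfl fun l _ => ?_
        rw [← map_smul]
        congr 1
        ext m
        simp [Pi.single_apply]
      rw [h1, Finset.sum_apply]
      refine Submodule.sum_mem _ fun l _ => ?_
      rw [Pi.smul_apply, smul_eq_mul]
      have := fpU_mul 𝒜 (claim1 c ((hK c).1 hc) l) (ih _ (hπ (Pi.single l 1)) i)
      rw [add_comm] at this
      exact_mod_cast this
  rw [Fintype.linearIndependent_iff]
  intro c hc i
  apply fpr_ext 𝒜
  intro t
  exact fpU_zero 𝒜 (claim2 (t.toNat + 1) c ((hK c).2 hc) i) t (by push_cast; omega)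

end Graded

section LA
variable {k A B C : Type} [Field k] [AddCommGroup A] [Module k A] [AddCommGroup B] [Module k B]
  [AddCommGroup C] [Module k C]

lemma fp_finrank_map_congr (V : Submodule k A) (f : A →ₗ[k] B) (g : A →ₗ[k] C)
    (h : ∀ v ∈ V, f v = 0 ↔ g v = 0) :
    Module.finrank k (V.map f) = Module.finrank k (V.map g) := by
  rw [← LinearMap.range_domRestrict, ← LinearMap.range_domRestrict]
  have hk : LinearMap.ker (f.domRestrict V) = LinearMap.ker (g.domRestrict V) := by
    ext ⟨v, hv⟩
    simpa using h v hv
  exact LinearEquiv.finrank_eq ((LinearMap.quotKerEquivRange _).symm ≪≫ₗ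
    Submodule.quotEquivOfEq _ _ hk ≪≫ₗ LinearMap.quotKerEquivRange _)

lemma fp_rank_nullity (W : Submodule k B) [FiniteDimensional k W] (g : B →ₗ[k] C) :
    Module.finrank k W = Module.finrank k (W.map g) +
      Module.finrank k (W ⊓ LinearMap.ker g : Submodule k B) := by
  rw [← LinearMap.finrank_range_add_finrank_ker (g.domRestrict W), LinearMap.range_domRestrict]
  congr 1
  have : LinearMap.ker (g.domRestrict W) = (LinearMap.ker g).comap W.subtype := by
    ext ⟨v, hv⟩; simp
  rw [this, ← Submodule.finrank_map_subtype_eq, Submodule.map_comap_subtype]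

lemma fp_finrank_pi {r : ℕ} {G : Type} [AddCommGroup G] [Module k G]
    (p : Fin r → Submodule k G) [∀ i, FiniteDimensional k (p i)] :
    Module.finrank k (Submodule.pi Set.univ p) = ∑ i, Module.finrank k (p i) := by
  rw [← Module.finrank_pi_fintype k]
  exact LinearEquiv.finrank_eq
    { toFun := fun v i => ⟨v.1 i, v.2 i trivial⟩
      invFun := fun v => ⟨fun i => v i, fun i _ => (v i).2⟩
      map_add' := fun _ _ => rfl
      map_smul' := fun _ _ => rfl
      left_inv := fun _ => rfl
      right_inv := fun _ => rfl }
end LA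

/-- Hilbert function of `R/J` -/
def fpH {k R : Type} [Field k] [CommRing R] [Algebra k R]
    (𝒜 : ℤ → Submodule k R) (J : Ideal R) (j : ℤ) : ℕ :=
  Module.finrank k ((𝒜 j).map ((J • ⊤ : Submodule R R).mkQ.restrictScalars k))

section Dim
variable {k R : Type} [Field k] [CommRing R] [Algebra k R]
    (𝒜 : ℤ → Submodule k R) [GradedAlgebra 𝒜]
    {F : Type} [AddCommGroup F] [Module R F] [Module k F] [IsScalarTower k R F]
    (ℱ : ℤ → Submodule k F) [DirectSum.Decomposition ℱ]

/-- `∑ c_i e_i` as a `k`-linear map -/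
def fpLC {r : ℕ} (e : Fin r → F) : (Fin r → R) →ₗ[k] F :=
  (Fintype.linearCombination R e).restrictScalars k

lemma fpLC_apply {r : ℕ} (e : Fin r → F) (c : Fin r → R) :
    fpLC (k := k) e c = ∑ i, c i • e i := by
  simp [fpLC, Fintype.linearCombination_apply]

lemma fpLC_map (hℱ : ∀ (a b : ℤ), ∀ r ∈ 𝒜 a, ∀ z ∈ ℱ b, r • z ∈ ℱ (a + b))
    {r : ℕ} (e : Fin r → F) (a : Fin r → ℤ) (hea : ∀ i, e i ∈ ℱ (a i)) (j : ℤ) :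
    (Submodule.pi Set.univ fun i => 𝒜 (j - a i)).map (fpLC (k := k) e) =
      ℱ j ⊓ (Submodule.span R (Set.range e)).restrictScalars k := by
  apply le_antisymm
  · rintro _ ⟨c, hc, rfl⟩
    rw [fpLC_apply]
    refine ⟨Submodule.sum_mem _ fun i _ => ?_, ?_⟩
    · have := hℱ _ _ _ (hc i trivial) _ (hea i)
      simpa using this
    · have : ∑ i, c i • e i ∈ Submodule.span R (Set.range e) :=
        Submodule.sum_mem _ fun i _ => Submodule.smul_mem _ _ (Submodule.subset_span ⟨i, rfl⟩)
      exact this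
  · rintro z ⟨hz, hz'⟩
    simp only [Submodule.coe_restrictScalars, SetLike.mem_coe] at hz'
    rw [← Fintype.range_linearCombination] at hz'
    obtain ⟨c, hc⟩ := hz'
    rw [Fintype.linearCombination_apply] at hc
    refine ⟨fun i => fpr 𝒜 (j - a i) (c i), fun i _ => fpr_mem _ _ _, ?_⟩
    rw [fpLC_apply]
    have := congrArg (fpr ℱ j) hc
    rw [map_sum, fpr_of_mem ℱ hz] at this
    simpa only [fun l => fpr_smul 𝒜 ℱ hℱ (hea l) j (c l)] using this

lemma fp_fin_inf (hℱ : ∀ (a b : ℤ), ∀ r ∈ 𝒜 a, ∀ z ∈ ℱ b, r • z ∈ ℱ (a + b))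
    {r : ℕ} (e : Fin r → F) (a : Fin r → ℤ) (hea : ∀ i, e i ∈ ℱ (a i)) (j : ℤ)
    (hfin : ∀ i, FiniteDimensional k (𝒜 (j - a i))) :
    FiniteDimensional k
      (ℱ j ⊓ (Submodule.span R (Set.range e)).restrictScalars k : Submodule k F) := by
  rw [← fpLC_map 𝒜 ℱ hℱ e a hea j]
  have : FiniteDimensional k (Submodule.pi Set.univ fun i => 𝒜 (j - a i)) := by
    let f : (Submodule.pi Set.univ fun i => 𝒜 (j - a i)) →ₗ[k] (∀ i, 𝒜 (j - a i)) :=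
      { toFun := fun v i => ⟨v.1 i, v.2 i trivial⟩
        map_add' := fun _ _ => rfl
        map_smul' := fun _ _ => rfl }
    refine FiniteDimensional.of_injective f ?_
    intro v w h
    apply Subtype.ext
    funext i
    exact congrArg (fun g => (g i : R)) h
  infer_instance

lemma fp_dim (hfin : ∀ j, FiniteDimensional k (𝒜 j))
    (hℱ : ∀ (a b : ℤ), ∀ r ∈ 𝒜 a, ∀ z ∈ ℱ b, r • z ∈ ℱ (a + b))
    {r : ℕ} (e : Fin r → F) (a : Fin r → ℤ) (hea : ∀ i, e i ∈ ℱ (a i))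
    (hli : LinearIndependent R e) (J : Ideal R)
    (hJ : (J • ⊤ : Submodule R F) ⊓ Submodule.span R (Set.range e) ≤
      J • Submodule.span R (Set.range e)) (j : ℤ) :
    Module.finrank k ((ℱ j ⊓ (Submodule.span R (Set.range e)).restrictScalars k).map
      ((J • ⊤ : Submodule R F).mkQ.restrictScalars k)) = ∑ i, fpH 𝒜 J (j - a i) := by
  classical
  rw [← fpLC_map 𝒜 ℱ hℱ e a hea j, ← Submodule.map_comp]
  let g : (Fin r → R) →ₗ[k] (Fin r → R ⧸ (J • ⊤ : Submodule R R)) :=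
    LinearMap.pi fun i => ((J • ⊤ : Submodule R R).mkQ.restrictScalars k) ∘ₗ LinearMap.proj i
  have hg : (Submodule.pi Set.univ fun i => 𝒜 (j - a i)).map g =
      Submodule.pi Set.univ fun i =>
        (𝒜 (j - a i)).map ((J • ⊤ : Submodule R R).mkQ.restrictScalars k) := by
    apply le_antisymm
    · rintro _ ⟨c, hc, rfl⟩ i _
      exact ⟨c i, hc i trivial, rfl⟩
    · intro v hv
      choose c hc hc' using fun i => hv i trivial
      exact ⟨c, fun i _ => hc i, funext hc'⟩
  rw [fp_finrank_map_congr _ _ g, hg, fp_finrank_pi]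
  · rfl
  intro c _
  have h1 : g c = 0 ↔ ∀ i, c i ∈ J := by
    rw [funext_iff]
    refine forall_congr' fun i => ?_
    change (J • ⊤ : Submodule R R).mkQ (c i) = 0 ↔ _
    rw [Submodule.mkQ_apply, Submodule.Quotient.mk_eq_zero]
    simp
  rw [h1]
  change (J • ⊤ : Submodule R F).mkQ (fpLC (k := k) e c) = 0 ↔ _
  rw [Submodule.mkQ_apply, Submodule.Quotient.mk_eq_zero, fpLC_apply]
  constructor
  · intro h
    have h2 := hJ ⟨h, Submodule.sum_mem _ fun i _ =>
      Submodule.smul_mem _ _ (Submodule.subset_span ⟨i, rfl⟩)⟩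
    rw [Submodule.mem_ideal_smul_span_iff_exists_sum] at h2
    obtain ⟨b, hb, hb'⟩ := h2
    rw [Finsupp.sum_fintype _ _ (by simp)] at hb'
    have h3 : ∑ i, (b i - c i) • e i = 0 := by
      simp [sub_smul, hb']
    intro i
    have := Fintype.linearIndependent_iff.1 hli _ h3 i
    rw [sub_eq_zero] at this
    rw [← this]; exact hb i
  · intro h
    exact Submodule.sum_mem _ fun i _ => Submodule.smul_mem_smul (h i) trivial

end Dim

section Tor
variable {k R : Type} [Field k] [CommRing R] [Algebra k R]
    (𝒜 : ℤ → Submodule k R) [GradedAlgebra 𝒜]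
    (F : ℕ → Type) [∀ i, AddCommGroup (F i)] [∀ i, Module R (F i)]
    [∀ i, Module k (F i)] [∀ i, IsScalarTower k R (F i)]
    (ℱ : ∀ i, ℤ → Submodule k (F i)) [∀ i, DirectSum.Decomposition (ℱ i)]

/-- the degree `j` piece of `F_i / J F_i` -/
def fpC (J : Ideal R) (i : ℕ) (j : ℤ) : Submodule k (F i ⧸ (J • ⊤ : Submodule R (F i))) :=
  (ℱ i j).map (((J • ⊤ : Submodule R (F i)).mkQ).restrictScalars k)

/-- boundaries are images of homogeneous elements -/
lemma fp_bd_eq (hℱ : ∀ (i : ℕ) (a b : ℤ), ∀ r ∈ 𝒜 a, ∀ z ∈ ℱ i b, r • z ∈ ℱ i (a + b))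
    (dF : ∀ i, F (i + 1) →ₗ[R] F i)
    (hdFdeg : ∀ (i : ℕ) (t : ℤ), ∀ z ∈ ℱ (i + 1) t, dF i z ∈ ℱ i t)
    (J : Ideal R) (hJ : ∀ t, ∀ r ∈ J, fpr 𝒜 t r ∈ J) (i : ℕ) (j : ℤ) :
    boundariesPiece k F ℱ dF J i j =
      (fpC F ℱ J (i + 1) j).map ((inducedQuot J (dF i)).restrictScalars k) := by
  apply le_antisymm
  · rintro _ ⟨⟨u, hu, rfl⟩, ⟨w, hw⟩⟩
    obtain ⟨w, rfl⟩ := Submodule.mkQ_surjective _ w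
    have hw' : dF i w - u ∈ (J • ⊤ : Submodule R (F i)) := by
      rw [← Submodule.Quotient.eq]
      exact hw
    have h2 := fpr_smul_top 𝒜 (ℱ i) (hℱ i) J hJ j _ hw'
    have h3 := fpr_comm (ℱ (i + 1)) (ℱ i) (dF i).toAddMonoidHom (hdFdeg i) j w
    simp only [LinearMap.toAddMonoidHom_coe] at h3
    rw [map_sub, fpr_of_mem _ hu, h3, ← Submodule.Quotient.eq] at h2
    exact ⟨_, ⟨_, fpr_mem (ℱ (i + 1)) j w, rfl⟩, h2⟩
  · rintro _ ⟨_, ⟨w, hw, rfl⟩, rfl⟩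
    exact ⟨⟨dF i w, hdFdeg i j w hw, rfl⟩, ⟨_, rfl⟩⟩

lemma fp_bd_eq' (hℱ : ∀ (i : ℕ) (a b : ℤ), ∀ r ∈ 𝒜 a, ∀ z ∈ ℱ i b, r • z ∈ ℱ i (a + b))
    (dF : ∀ i, F (i + 1) →ₗ[R] F i)
    (hdFdeg : ∀ (i : ℕ) (t : ℤ), ∀ z ∈ ℱ (i + 1) t, dF i z ∈ ℱ i t)
    (J : Ideal R) (hJ : ∀ t, ∀ r ∈ J, fpr 𝒜 t r ∈ J) (i : ℕ) (j : ℤ) :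
    boundariesPiece k F ℱ dF J i j =
      (ℱ i j ⊓ (LinearMap.range (dF i)).restrictScalars k).map
        ((J • ⊤ : Submodule R (F i)).mkQ.restrictScalars k) := by
  rw [fp_bd_eq 𝒜 F ℱ hℱ dF hdFdeg J hJ]
  apply le_antisymm
  · rintro _ ⟨_, ⟨w, hw, rfl⟩, rfl⟩
    exact ⟨dF i w, ⟨hdFdeg i j w hw, ⟨w, rfl⟩⟩, rfl⟩
  · rintro _ ⟨_, ⟨hw, ⟨w, rfl⟩⟩, rfl⟩
    have h3 := fpr_comm (ℱ (i + 1)) (ℱ i) (dF i).toAddMonoidHom (hdFdeg i) j w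
    simp only [LinearMap.toAddMonoidHom_coe] at h3
    rw [fpr_of_mem _ hw] at h3
    refine ⟨_, ⟨_, fpr_mem (ℱ (i + 1)) j w, rfl⟩, ?_⟩
    change Submodule.Quotient.mk (dF i (fpr (ℱ (i + 1)) j w)) = Submodule.Quotient.mk (dF i w)
    rw [h3]

lemma fp_c_eq (hFfin : ∀ i j, FiniteDimensional k (ℱ i j))
    (hℱ : ∀ (i : ℕ) (a b : ℤ), ∀ r ∈ 𝒜 a, ∀ z ∈ ℱ i b, r • z ∈ ℱ i (a + b))
    (dF : ∀ i, F (i + 1) →ₗ[R] F i)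
    (hdFdeg : ∀ (i : ℕ) (t : ℤ), ∀ z ∈ ℱ (i + 1) t, dF i z ∈ ℱ i t)
    (J : Ideal R) (hJ : ∀ t, ∀ r ∈ J, fpr 𝒜 t r ∈ J) (i : ℕ) (j : ℤ) :
    Module.finrank k (fpC F ℱ J (i + 1) j) =
      Module.finrank k (boundariesPiece k F ℱ dF J i j) +
      Module.finrank k (cyclesPiece k F ℱ dF J (i + 1) j) := by
  rw [fp_bd_eq 𝒜 F ℱ hℱ dF hdFdeg J hJ]
  have : FiniteDimensional k (fpC F ℱ J (i + 1) j) := by unfold fpC; infer_instance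
  rw [fp_rank_nullity (fpC F ℱ J (i + 1) j) ((inducedQuot J (dF i)).restrictScalars k)]
  rfl

lemma fp_bd_le (dF : ∀ i, F (i + 1) →ₗ[R] F i)
    (hex : ∀ i : ℕ, LinearMap.range (dF (i + 1)) = LinearMap.ker (dF i))
    (J : Ideal R) (i : ℕ) (j : ℤ) :
    boundariesPiece k F ℱ dF J i j ≤ cyclesPiece k F ℱ dF J i j := by
  cases i with
  | zero => exact inf_le_left
  | succ i =>
    refine inf_le_inf le_rfl ?_
    rintro _ ⟨w, rfl⟩
    obtain ⟨w, rfl⟩ := Submodule.mkQ_surjective _ w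
    have : dF i (dF (i + 1) w) = 0 := by
      rw [← LinearMap.mem_ker, ← hex]; exact ⟨w, rfl⟩
    change Submodule.Quotient.mk (dF i (dF (i + 1) w)) = 0
    rw [this]; rfl

lemma fp_tor_eq (hFfin : ∀ i j, FiniteDimensional k (ℱ i j))
    (dF : ∀ i, F (i + 1) →ₗ[R] F i)
    (hex : ∀ i : ℕ, LinearMap.range (dF (i + 1)) = LinearMap.ker (dF i))
    (J : Ideal R) (i : ℕ) (j : ℤ) :
    (torPieceDim k F ℱ dF J i j : ℤ) = Module.finrank k (cyclesPiece k F ℱ dF J i j) -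
      Module.finrank k (boundariesPiece k F ℱ dF J i j) := by
  have h : FiniteDimensional k (fpC F ℱ J i j) := by unfold fpC; infer_instance
  have h2 : cyclesPiece k F ℱ dF J i j ≤ fpC F ℱ J i j := by
    cases i with
    | zero => exact le_rfl
    | succ i => exact inf_le_left
  have h3 := Submodule.finiteDimensional_of_le h2
  have := Submodule.finrank_mono (fp_bd_le F ℱ dF hex J i j)
  unfold torPieceDim
  omega

lemma fp_tor_le (hFfin : ∀ i j, FiniteDimensional k (ℱ i j))
    (dF : ∀ i, F (i + 1) →ₗ[R] F i)
    (J : Ideal R) (i : ℕ) (j : ℤ) :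
    torPieceDim k F ℱ dF J i j ≤ Module.finrank k (fpC F ℱ J i j) := by
  have h : FiniteDimensional k (fpC F ℱ J i j) := by unfold fpC; infer_instance
  have h2 : cyclesPiece k F ℱ dF J i j ≤ fpC F ℱ J i j := by
    cases i with
    | zero => exact le_rfl
    | succ i => exact inf_le_left
  have := Submodule.finrank_mono h2
  unfold torPieceDim
  omega

lemma fp_alt (hFfin : ∀ i j, FiniteDimensional k (ℱ i j))
    (hℱ : ∀ (i : ℕ) (a b : ℤ), ∀ r ∈ 𝒜 a, ∀ z ∈ ℱ i b, r • z ∈ ℱ i (a + b))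
    (dF : ∀ i, F (i + 1) →ₗ[R] F i)
    (hdFdeg : ∀ (i : ℕ) (t : ℤ), ∀ z ∈ ℱ (i + 1) t, dF i z ∈ ℱ i t)
    (hex : ∀ i : ℕ, LinearMap.range (dF (i + 1)) = LinearMap.ker (dF i))
    (J : Ideal R) (hJ : ∀ t, ∀ r ∈ J, fpr 𝒜 t r ∈ J) (n : ℕ) (j : ℤ) :
    ∑ i ∈ Finset.range (n + 1), (-1 : ℤ) ^ i * torPieceDim k F ℱ dF J i j =
      ∑ i ∈ Finset.range (n + 1), (-1 : ℤ) ^ i * Module.finrank k (fpC F ℱ J i j) -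
        (-1) ^ n * Module.finrank k (boundariesPiece k F ℱ dF J n j) := by
  induction n with
  | zero =>
    simp only [zero_add, Finset.sum_range_one, pow_zero, one_mul]
    rw [fp_tor_eq F ℱ hFfin dF hex]
    rfl
  | succ n ih =>
    rw [Finset.sum_range_succ, ih, Finset.sum_range_succ _ (n + 1), fp_tor_eq F ℱ hFfin dF hex,
      fp_c_eq 𝒜 F ℱ hFfin hℱ dF hdFdeg J hJ]
    push_cast
    ring

/-- vanishing criterion -/
lemma fp_tor_zero (dF : ∀ i, F (i + 1) →ₗ[R] F i)
    (hex : ∀ i : ℕ, LinearMap.range (dF (i + 1)) = LinearMap.ker (dF i))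
    (J : Ideal R) (i : ℕ)
    (hi : (J • ⊤ : Submodule R (F i)) ⊓ LinearMap.range (dF i) ≤ J • LinearMap.range (dF i))
    (j : ℤ) : torPieceDim k F ℱ dF J (i + 1) j = 0 := by
  have h : cyclesPiece k F ℱ dF J (i + 1) j ≤ boundariesPiece k F ℱ dF J (i + 1) j := by
    refine inf_le_inf le_rfl ?_
    intro w hw
    obtain ⟨w, rfl⟩ := Submodule.mkQ_surjective _ w
    have hw' : dF i w ∈ (J • ⊤ : Submodule R (F i)) := by
      rw [← Submodule.Quotient.mk_eq_zero]; exact hw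
    have h2 := hi ⟨hw', ⟨w, rfl⟩⟩
    rw [← Submodule.map_top, ← Submodule.map_smul''] at h2
    obtain ⟨w', hw', he⟩ := h2
    have h3 : w - w' ∈ LinearMap.range (dF (i + 1)) := by
      rw [hex, LinearMap.mem_ker, map_sub, he, sub_self]
    obtain ⟨v, hv⟩ := h3
    refine ⟨Submodule.Quotient.mk v, ?_⟩
    change Submodule.Quotient.mk (dF (i + 1) v) = Submodule.Quotient.mk w
    rw [Submodule.Quotient.eq, hv]
    simpa using hw'
  have he := le_antisymm h (fp_bd_le F ℱ dF hex J (i + 1) j)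
  unfold torPieceDim
  rw [he]
  simp

end Tor

section Ring
variable {k R : Type} [Field k] [CommRing R] [Algebra k R]
    (𝒜 : ℤ → Submodule k R) [GradedAlgebra 𝒜]

lemma fp_hmul (a b : ℤ) : ∀ r ∈ 𝒜 a, ∀ z ∈ 𝒜 b, r • z ∈ 𝒜 (a + b) := by
  intro r hr z hz
  exact SetLike.mul_mem_graded hr hz

lemma fp_art (I : Ideal R) (hIfl : IsFiniteLength R (R ⧸ I)) : IsArtinianRing (R ⧸ I) := by
  have h := (isFiniteLength_iff_isNoetherian_isArtinian.1 hIfl).2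
  exact isArtinian_of_tower R h

lemma fp_fd [Algebra.FiniteType k R] (I K : Ideal R) (hIfl : IsFiniteLength R (R ⧸ I))
    (hIK : I ≤ K.radical) : Module.Finite k (R ⧸ K) := by
  have := fp_art I hIfl
  rw [Module.finite_iff_krullDimLE_zero, Ring.krullDimLE_zero_iff]
  intro P hP
  have hP' : (P.comap (Ideal.Quotient.mk K)).IsPrime := inferInstance
  have hK : K ≤ P.comap (Ideal.Quotient.mk K) := by
    intro z hz
    rw [Ideal.mem_comap, Ideal.Quotient.eq_zero_iff_mem.2 hz]; exact zero_mem _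
  have hI : I ≤ P.comap (Ideal.Quotient.mk K) :=
    hIK.trans ((Ideal.IsPrime.radical_le_iff hP').2 hK)
  have hart : IsArtinianRing (R ⧸ P.comap (Ideal.Quotient.mk K)) :=
    (Ideal.Quotient.factor_surjective hI).isArtinianRing
  have hmax : (P.comap (Ideal.Quotient.mk K)).IsMaximal :=
    Ideal.Quotient.maximal_of_isField _ (IsArtinianRing.isField_of_isDomain _)
  have := Ideal.map_comap_of_surjective _ Ideal.Quotient.mk_surjective P
  rcases Ideal.map_eq_top_or_isMaximal_of_surjective (Ideal.Quotient.mk K)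
    Ideal.Quotient.mk_surjective hmax with h | h
  · rw [this] at h
    exact absurd h hP.ne_top
  · rwa [this] at h

lemma fp_A_fin (h𝒜neg : ∀ t : ℤ, t < 0 → 𝒜 t = ⊥) {d : ℕ} (x : Fin d → R) (δ : Fin d → ℕ)
    (hδpos : ∀ j, 0 < δ j) (hxhom : ∀ j, x j ∈ 𝒜 (δ j))
    (hfd : Module.Finite k (R ⧸ Ideal.span (Set.range x))) :
    ∀ j, FiniteDimensional k (𝒜 j) := by
  have key : ∀ N : ℕ, ∀ j : ℤ, j < N → FiniteDimensional k (𝒜 j) := by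
    intro N
    induction N with
    | zero =>
      intro j hj
      rw [h𝒜neg j (by simpa using hj)]
      infer_instance
    | succ N ih =>
      intro j hj
      have h1 := fp_fin_inf 𝒜 𝒜 (fp_hmul 𝒜) x (fun i => (δ i : ℤ)) hxhom j
        (fun i => ih _ (by have := hδpos i; push_cast at hj; omega))
      rw [← Submodule.fg_iff_finiteDimensional]
      refine Submodule.fg_of_fg_map_of_fg_inf_ker
        ((Ideal.span (Set.range x)).mkQ.restrictScalars k) ?_ ?_
      · exact IsNoetherian.noetherian _
      · have h2 : LinearMap.ker ((Ideal.span (Set.range x)).mkQ.restrictScalars k) =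
          (Submodule.span R (Set.range x)).restrictScalars k := by
          rw [LinearMap.ker_restrictScalars, Submodule.ker_mkQ]
        rw [h2]
        exact (Submodule.fg_iff_finiteDimensional _).2 h1
  intro j
  exact key (j.toNat + 1) j (by push_cast; omega)

lemma fpH_zero {J : Ideal R} {j : ℤ} (h : 𝒜 j ≤ J.restrictScalars k) : fpH 𝒜 J j = 0 := by
  unfold fpH
  have : (𝒜 j).map ((J • ⊤ : Submodule R R).mkQ.restrictScalars k) = ⊥ := by
    rw [eq_bot_iff]
    rintro _ ⟨z, hz, rfl⟩
    change Submodule.Quotient.mk z = 0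
    rw [Submodule.Quotient.mk_eq_zero]
    simpa using h hz
  rw [this, finrank_bot]

lemma fpH_support (J : Ideal R) (hJ : ∀ t, ∀ r ∈ J, fpr 𝒜 t r ∈ J)
    (hfd : Module.Finite k (R ⧸ J)) : (Function.support (fpH 𝒜 J)).Finite := by
  classical
  obtain ⟨s, hs⟩ := hfd.fg_top
  choose l hl using fun z : R ⧸ J => Ideal.Quotient.mk_surjective z
  choose S hS hS' using fun z : R => fpr_sum 𝒜 z
  refine (s.biUnion fun z => S (l z)).finite_toSet.subset ?_
  intro j hj
  by_contra hj'
  apply hj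
  apply fpH_zero
  intro u hu
  have h1 : Ideal.Quotient.mk J u ∈ Submodule.span k (s : Set (R ⧸ J)) := by rw [hs]; trivial
  have h2 : ∀ w ∈ Submodule.span k (s : Set (R ⧸ J)), ∀ v : R, Ideal.Quotient.mk J v = w →
      fpr 𝒜 j v ∈ J := by
    intro w hw
    induction hw using Submodule.span_induction with
    | mem w hw =>
      intro v hv
      have h3 : v - l w ∈ J := by rw [← Ideal.Quotient.eq, hv, hl]
      have h4 := hJ j _ h3
      rw [map_sub, hS' (l w) j, sub_zero] at h4
      · exact h4
      · intro h
        apply hj'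
        simp only [Finset.coe_biUnion, Set.mem_iUnion]
        exact ⟨w, hw, h⟩
    | zero =>
      intro v hv
      exact hJ _ _ (Ideal.Quotient.eq_zero_iff_mem.1 hv)
    | add a b _ _ iha ihb =>
      intro v hv
      have h3 : v - (l a + l b) ∈ J := by rw [← Ideal.Quotient.eq, hv, map_add, hl, hl]
      have h4 := hJ j _ h3
      rw [map_sub, map_add] at h4
      have := add_mem h4 (add_mem (iha _ (hl a)) (ihb _ (hl b)))
      simpa using this
    | smul c a _ iha =>
      intro v hv
      have h3 : v - c • l a ∈ J := by
        rw [← Ideal.Quotient.eq, hv]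
        rw [Algebra.smul_def, Algebra.smul_def, map_mul, hl]
        rfl
      have h4 := hJ j _ h3
      rw [map_sub, map_smul] at h4
      have h5 : c • fpr 𝒜 j (l a) ∈ J := by
        rw [Algebra.smul_def]; exact J.mul_mem_left _ (iha _ (hl a))
      have := add_mem h4 h5
      simpa using this
  have := h2 _ h1 u rfl
  rwa [fpr_of_mem 𝒜 hu] at this

lemma fp_bracket_hom (p : ℕ) (hp : p.Prime) [CharP R p] (I : Ideal R)
    (hI : Ideal.IsHomogeneous 𝒜 I) (n : ℕ) :
    ∀ t, ∀ r ∈ bracketPow I (p ^ n), fpr 𝒜 t r ∈ bracketPow I (p ^ n) := by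
  classical
  have : Fact p.Prime := ⟨hp⟩
  have h : bracketPow I (p ^ n) =
      Ideal.span {y | ∃ z ∈ I, SetLike.IsHomogeneousElem 𝒜 z ∧ y = z ^ (p ^ n)} := by
    apply le_antisymm
    · refine Ideal.span_le.2 ?_
      rintro _ ⟨z, hz, rfl⟩
      obtain ⟨S, hS, _⟩ := fpr_sum 𝒜 z
      simp only
      rw [← hS, sum_pow_char_pow]
      refine Submodule.sum_mem _ fun t _ => Ideal.subset_span ⟨_, hI t hz, ⟨t, fpr_mem _ _ _⟩, rfl⟩
    · refine Ideal.span_mono ?_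
      rintro _ ⟨z, hz, _, rfl⟩
      exact ⟨z, hz, rfl⟩
  have h2 : (bracketPow I (p ^ n)).IsHomogeneous 𝒜 := by
    rw [h]
    apply Ideal.homogeneous_span
    rintro _ ⟨z, _, ⟨t, ht⟩, rfl⟩
    exact ⟨_, SetLike.pow_mem_graded (p ^ n) ht⟩
  intro t r hr
  exact h2 t hr

lemma fp_bracket_rad (I : Ideal R) (q : ℕ) : I ≤ (bracketPow I q).radical := by
  intro z hz
  exact ⟨q, Ideal.subset_span ⟨z, hz, rfl⟩⟩

lemma fpH_add (hfin : ∀ j, FiniteDimensional k (𝒜 j)) (J : Ideal R) (j : ℤ) :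
    Module.finrank k (𝒜 j) = fpH 𝒜 J j +
      Module.finrank k (𝒜 j ⊓ J.restrictScalars k : Submodule k R) := by
  have := hfin j
  rw [fp_rank_nullity (𝒜 j) ((J • ⊤ : Submodule R R).mkQ.restrictScalars k)]
  unfold fpH
  rw [LinearMap.ker_restrictScalars, Submodule.ker_mkQ]
  have h : (𝒜 j ⊓ (J • ⊤ : Submodule R R).restrictScalars k : Submodule k R) =
      𝒜 j ⊓ J.restrictScalars k := by
    have h' : (J • ⊤ : Submodule R R) = J := by simp
    rw [h']
  rw [h]

lemma fpH_step (hfin : ∀ j, FiniteDimensional k (𝒜 j)) (X X' : Ideal R) (u : R) (δ : ℤ)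
    (hu : u ∈ 𝒜 δ) (hX : ∀ t, ∀ r ∈ X, fpr 𝒜 t r ∈ X)
    (hX' : X' = X ⊔ Ideal.span {u}) (hr : ∀ r, u * r ∈ X → r ∈ X) :
    (∀ t, ∀ r ∈ X', fpr 𝒜 t r ∈ X') ∧
    ∀ j, (fpH 𝒜 X' j : ℤ) = fpH 𝒜 X j - fpH 𝒜 X (j - δ) := by
  have hdec : ∀ t r, r ∈ X' → ∃ b ∈ X, ∃ c ∈ 𝒜 (t - δ), fpr 𝒜 t r = b + c * u := by
    intro t r hr
    rw [hX', Submodule.mem_sup] at hr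
    obtain ⟨b, hb, c, hc, rfl⟩ := hr
    rw [Ideal.mem_span_singleton'] at hc
    obtain ⟨c, rfl⟩ := hc
    refine ⟨fpr 𝒜 t b, hX t b hb, fpr 𝒜 (t - δ) c, fpr_mem _ _ _, ?_⟩
    rw [map_add, ← smul_eq_mul, fpr_smul 𝒜 𝒜 (fp_hmul 𝒜) hu, smul_eq_mul]
  have huX : u ∈ X' := by
    rw [hX']; exact le_sup_right (a := X) (Ideal.mem_span_singleton_self _)
  have hle : X ≤ X' := by rw [hX']; exact le_sup_left
  refine ⟨?_, ?_⟩
  · intro t r hr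
    obtain ⟨b, hb, c, _, h⟩ := hdec t r hr
    rw [h]
    exact add_mem (hle hb) (X'.mul_mem_left _ huX)
  intro j
  have h1 := fpH_add 𝒜 hfin X j
  have h2 := fpH_add 𝒜 hfin X' j
  have := hfin j
  have h3 := fp_rank_nullity (𝒜 j ⊓ X'.restrictScalars k : Submodule k R)
    ((X • ⊤ : Submodule R R).mkQ.restrictScalars k)
  have h4 : (𝒜 j ⊓ X'.restrictScalars k ⊓
      LinearMap.ker ((X • ⊤ : Submodule R R).mkQ.restrictScalars k) : Submodule k R) =
      𝒜 j ⊓ X.restrictScalars k := by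
    rw [LinearMap.ker_restrictScalars, Submodule.ker_mkQ]
    ext z
    simp only [smul_eq_mul, Ideal.mul_top, Submodule.mem_inf, Submodule.restrictScalars_mem]
    constructor
    · rintro ⟨⟨h, _⟩, h'⟩; exact ⟨h, h'⟩
    · rintro ⟨h, h'⟩; exact ⟨⟨h, hle h'⟩, h'⟩
  rw [h4] at h3
  have h5 : (𝒜 j ⊓ X'.restrictScalars k : Submodule k R).map
      ((X • ⊤ : Submodule R R).mkQ.restrictScalars k) =
      (𝒜 (j - δ)).map (((X • ⊤ : Submodule R R).mkQ.restrictScalars k) ∘ₗ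
        LinearMap.mulLeft k u) := by
    apply le_antisymm
    · rintro _ ⟨z, ⟨hz, hz'⟩, rfl⟩
      obtain ⟨b, hb, c, hc, h⟩ := hdec j z hz'
      rw [fpr_of_mem 𝒜 hz] at h
      refine ⟨c, hc, ?_⟩
      change Submodule.Quotient.mk (u * c) = Submodule.Quotient.mk z
      rw [Submodule.Quotient.eq, h]
      have : u * c - (b + c * u) = -b := by ring
      rw [this]
      simpa using hb
    · rintro _ ⟨c, hc, rfl⟩
      refine ⟨u * c, ⟨?_, X'.mul_mem_right _ huX⟩, rfl⟩
      have := SetLike.mul_mem_graded hu hc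
      rwa [add_sub_cancel] at this
  have h6 : Module.finrank k ((𝒜 j ⊓ X'.restrictScalars k : Submodule k R).map
      ((X • ⊤ : Submodule R R).mkQ.restrictScalars k)) = fpH 𝒜 X (j - δ) := by
    rw [h5]
    apply fp_finrank_map_congr
    intro c _
    change Submodule.Quotient.mk (u * c) = 0 ↔ Submodule.Quotient.mk c = 0
    rw [Submodule.Quotient.mk_eq_zero, Submodule.Quotient.mk_eq_zero]
    simp only [smul_eq_mul, Ideal.mul_top]
    exact ⟨hr c, fun h => X.mul_mem_left _ h⟩
  rw [h6] at h3
  omega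

end Ring

section Conv

/-- convolution of a Laurent polynomial with a function -/
def fpConv (h : ℤ → ℤ) : (ℤ →₀ ℤ) →ₗ[ℤ] (ℤ → ℤ) :=
  Finsupp.linearCombination ℤ (fun a => fun j => h (j - a))

/-- evaluation of a Laurent polynomial -/
def fpEv (E : ℤ → ℂ) : (ℤ →₀ ℤ) →ₗ[ℤ] ℂ := Finsupp.linearCombination ℤ E

/-- shift -/
def fpSh (s : ℤ) : (ℤ →₀ ℤ) →ₗ[ℤ] (ℤ →₀ ℤ) := Finsupp.lmapDomain ℤ ℤ (fun a => a + s)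

lemma fpConv_single (h : ℤ → ℤ) (a c j : ℤ) :
    fpConv h (Finsupp.single a c) j = c * h (j - a) := by
  simp [fpConv, Finsupp.linearCombination_single]

lemma fpConv_sh (h : ℤ → ℤ) (s : ℤ) (Q : ℤ →₀ ℤ) (j : ℤ) :
    fpConv h (fpSh s Q) j = fpConv h Q (j - s) := by
  induction Q using Finsupp.induction_linear with
  | zero => simp
  | add a b ha hb => simp [ha, hb]
  | single a c =>
    rw [fpSh, Finsupp.lmapDomain_apply, Finsupp.mapDomain_single, fpConv_single, fpConv_single]
    congr 2; ring

lemma fpEv_sh (E : ℤ → ℂ) (hE : ∀ a b, E (a + b) = E a * E b) (s : ℤ) (Q : ℤ →₀ ℤ) :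
    fpEv E (fpSh s Q) = E s * fpEv E Q := by
  induction Q using Finsupp.induction_linear with
  | zero => simp
  | add a b ha hb => simp [ha, hb, mul_add]
  | single a c =>
    rw [fpSh, Finsupp.lmapDomain_apply, Finsupp.mapDomain_single, fpEv,
      Finsupp.linearCombination_single, Finsupp.linearCombination_single, hE]
    simp only [zsmul_eq_mul]
    ring

lemma fpConv_hasSum (h : ℤ → ℤ) (E : ℤ → ℂ) (hE : ∀ a b, E (a + b) = E a * E b) (S : ℂ)
    (hS : HasSum (fun j => (h j : ℂ) * E j) S) (Q : ℤ →₀ ℤ) :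
    HasSum (fun j => (fpConv h Q j : ℂ) * E j) (fpEv E Q * S) := by
  induction Q using Finsupp.induction_linear with
  | zero => simp
  | add a b ha hb =>
    convert ha.add hb using 1
    · funext j
      simp [add_mul]
    · simp [add_mul]
  | single a c =>
    have h1 := (Equiv.subRight a).hasSum_iff.2 hS
    have h2 := h1.mul_left ((c : ℂ) * E a)
    have e1 : (fun j => (fpConv h (Finsupp.single a c) j : ℂ) * E j) =
        fun i => (c : ℂ) * E a * ((fun j => (h j : ℂ) * E j) ∘ (Equiv.subRight a)) i := by
      funext j
      rw [fpConv_single]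
      simp only [Function.comp, Equiv.subRight_apply]
      have : E j = E a * E (j - a) := by rw [← hE]; congr 1; ring
      rw [this]
      push_cast
      ring
    have e2 : fpEv E (Finsupp.single a c) = c * E a := by
      rw [fpEv, Finsupp.linearCombination_single, zsmul_eq_mul]
    rw [e1, e2]
    exact h2

lemma fpConv_inj (h : ℤ → ℤ) (hneg : ∀ j < 0, h j = 0) (h0 : h 0 ≠ 0) (Q : ℤ →₀ ℤ)
    (hQ : fpConv h Q = 0) : Q = 0 := by
  by_contra hne
  have hs : Q.support.Nonempty := Finsupp.support_nonempty_iff.2 hne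
  have h1 := congrFun hQ (Q.support.min' hs)
  rw [fpConv, Finsupp.linearCombination_apply, Finsupp.sum, Finset.sum_apply] at h1
  rw [Finset.sum_eq_single (Q.support.min' hs)] at h1
  · simp only [Pi.smul_apply, sub_self, smul_eq_mul, Pi.zero_apply, mul_eq_zero] at h1
    rcases h1 with h1 | h1
    · exact Finsupp.mem_support_iff.1 (Finset.min'_mem _ hs) h1
    · exact h0 h1
  · intro b hb hbne
    have := Finset.min'_le _ b hb
    rw [Pi.smul_apply, hneg _ (by omega), smul_zero]
  · intro h
    exact absurd (Finset.min'_mem _ hs) h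

end Conv

section Chain
variable {R : Type} [CommRing R]

/-- the ideal generated by the first `m` parameters -/
def fpX {d : ℕ} (x : Fin d → R) (m : ℕ) : Ideal R := Ideal.ofList ((List.ofFn x).take m)

/-- the parameters extended by zero -/
def fpu {d : ℕ} (x : Fin d → R) (m : ℕ) : R := if h : m < d then x ⟨m, h⟩ else 0

lemma fpX_zero {d : ℕ} (x : Fin d → R) : fpX x 0 = ⊥ := by
  simp [fpX]

lemma fpX_succ {d : ℕ} (x : Fin d → R) (m : ℕ) (hm : m < d) :
    fpX x (m + 1) = fpX x m ⊔ Ideal.span {fpu x m} := by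
  unfold fpX fpu
  rw [dif_pos hm, List.take_succ_eq_append_getElem (by simpa using hm), Ideal.ofList_append,
    Ideal.ofList_singleton]
  simp

lemma fpX_reg {d : ℕ} (x : Fin d → R)
    (hreg : RingTheory.Sequence.IsRegular R (List.ofFn x)) (m : ℕ) (hm : m < d) (r : R)
    (hr : fpu x m * r ∈ fpX x m) : r ∈ fpX x m := by
  have h := hreg.toIsWeaklyRegular.regular_mod_prev m (by simpa using hm)
  unfold fpu at hr
  rw [dif_pos hm] at hr
  have h2 : (List.ofFn x)[m]'(by simpa using hm) = x ⟨m, hm⟩ := by simp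
  rw [h2] at h
  have h3 : (Submodule.Quotient.mk r : R ⧸ (Ideal.ofList ((List.ofFn x).take m) • ⊤ : Submodule R R)) = 0 := by
    apply h
    simp only [smul_zero]
    rw [← Submodule.Quotient.mk_smul, Submodule.Quotient.mk_eq_zero]
    simpa [fpX] using hr
  rw [Submodule.Quotient.mk_eq_zero] at h3
  simpa [fpX] using h3

lemma fpX_last {d : ℕ} (x : Fin d → R) : fpX x d = Ideal.span (Set.range x) := by
  unfold fpX Ideal.ofList
  rw [List.take_of_length_le (by simp)]
  congr 1
  ext z
  simp [List.mem_ofFn]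

end Chain

section Res
variable {k R : Type} [Field k] [CommRing R] [Algebra k R]
    (𝒜 : ℤ → Submodule k R) [GradedAlgebra 𝒜]
    (F : ℕ → Type) [∀ i, AddCommGroup (F i)] [∀ i, Module R (F i)]
    [∀ i, Module k (F i)] [∀ i, IsScalarTower k R (F i)]
    (ℱ : ∀ i, ℤ → Submodule k (F i)) [∀ i, DirectSum.Decomposition (ℱ i)]

lemma fp_bases [IsNoetherianRing R] [∀ i, Module.Free R (F i)] [∀ i, Module.Finite R (F i)]
    (h𝒜neg : ∀ t : ℤ, t < 0 → 𝒜 t = ⊥)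
    (h𝒜zero : ∀ x ∈ 𝒜 0, ∃ c : k, algebraMap k R c = x)
    (hfin : ∀ j, FiniteDimensional k (𝒜 j))
    (hℱ : ∀ (i : ℕ) (a b : ℤ), ∀ r ∈ 𝒜 a, ∀ z ∈ ℱ i b, r • z ∈ ℱ i (a + b)) (i : ℕ) :
    ∃ (r : ℕ) (a : Fin r → ℤ), (∀ j, FiniteDimensional k (ℱ i j)) ∧
      ∀ (J : Ideal R) (j : ℤ),
        Module.finrank k (fpC F ℱ J i j) = ∑ l, fpH 𝒜 J (j - a l) := by
  obtain ⟨r, e, a, hea, hli, hsp⟩ := fp_graded_basis 𝒜 (ℱ i) h𝒜neg h𝒜zero (hℱ i) ⊤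
    (fun _ _ _ => trivial) (Module.Projective.of_equiv (Submodule.topEquiv (R := R) (M := F i)).symm)
  have htop : ∀ j, (ℱ i j ⊓ (Submodule.span R (Set.range e)).restrictScalars k) = ℱ i j := by
    intro j
    rw [hsp]; simp
  refine ⟨r, a, ?_, ?_⟩
  · intro j
    have := fp_fin_inf 𝒜 (ℱ i) (hℱ i) e a hea j (fun _ => hfin _)
    rwa [htop] at this
  · intro J j
    have := fp_dim 𝒜 (ℱ i) hfin (hℱ i) e a hea hli J (by rw [hsp]; exact inf_le_left) j
    rw [htop] at this
    exact this

lemma fp_exists_Q [IsNoetherianRing R] [∀ i, Module.Free R (F i)] [∀ i, Module.Finite R (F i)]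
    (h𝒜neg : ∀ t : ℤ, t < 0 → 𝒜 t = ⊥)
    (h𝒜zero : ∀ x ∈ 𝒜 0, ∃ c : k, algebraMap k R c = x)
    (hfin : ∀ j, FiniteDimensional k (𝒜 j))
    (hℱ : ∀ (i : ℕ) (a b : ℤ), ∀ r ∈ 𝒜 a, ∀ z ∈ ℱ i b, r • z ∈ ℱ i (a + b))
    (dF : ∀ i, F (i + 1) →ₗ[R] F i)
    (hdFdeg : ∀ (i : ℕ) (t : ℤ), ∀ z ∈ ℱ (i + 1) t, dF i z ∈ ℱ i t)
    (hex : ∀ i : ℕ, LinearMap.range (dF (i + 1)) = LinearMap.ker (dF i))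
    (d : ℕ) (hproj : ∀ i, d ≤ i → Module.Projective R (LinearMap.range (dF i))) :
    ∃ Q : ℤ →₀ ℤ, ∀ (J : Ideal R), (∀ t, ∀ r ∈ J, fpr 𝒜 t r ∈ J) → ∀ j : ℤ,
      ∑ i ∈ Finset.range (d + 1 + 1), (-1 : ℤ) ^ i * torPieceDim k F ℱ dF J i j =
        fpConv (fun j => (fpH 𝒜 J j : ℤ)) Q j := by
  choose r a hFfin hC using fp_bases 𝒜 F ℱ h𝒜neg h𝒜zero hfin hℱ
  obtain ⟨s, e, b, heb, hli, hsp⟩ := fp_graded_basis 𝒜 (ℱ (d + 1)) h𝒜neg h𝒜zero (hℱ (d + 1))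
    (LinearMap.range (dF (d + 1))) (by
      rintro t _ ⟨w, rfl⟩
      have := fpr_comm (ℱ (d + 2)) (ℱ (d + 1)) (dF (d + 1)).toAddMonoidHom (hdFdeg (d + 1)) t w
      exact ⟨fpr (ℱ (d + 2)) t w, this.symm⟩) (hproj _ (by omega))
  refine ⟨∑ i ∈ Finset.range (d + 1 + 1), (-1 : ℤ) ^ i • ∑ l, Finsupp.single (a i l) 1 -
    (-1 : ℤ) ^ (d + 1) • ∑ l, Finsupp.single (b l) 1, ?_⟩
  intro J hJ j
  rw [fp_alt 𝒜 F ℱ hFfin hℱ dF hdFdeg hex J hJ, fp_bd_eq' 𝒜 F ℱ hℱ dF hdFdeg J hJ]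
  have h1 := fp_dim 𝒜 (ℱ (d + 1)) hfin (hℱ (d + 1)) e b heb hli J (by
    rw [hsp, hex d]; exact fp_summand (dF d) (hproj d le_rfl) J) j
  rw [hsp] at h1
  rw [h1]
  simp only [map_sub, map_sum, map_smul, Pi.sub_apply, Finset.sum_apply, Pi.smul_apply,
    fpConv_single, one_mul, smul_eq_mul, hC]
  push_cast
  rfl

lemma fp_tor_bot (hFfin : ∀ i j, FiniteDimensional k (ℱ i j))
    (hℱ : ∀ (i : ℕ) (a b : ℤ), ∀ r ∈ 𝒜 a, ∀ z ∈ ℱ i b, r • z ∈ ℱ i (a + b))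
    (dF : ∀ i, F (i + 1) →ₗ[R] F i) (X : Ideal R) (hX : ∀ t, ∀ r ∈ X, fpr 𝒜 t r ∈ X)
    (ε : F 0 →ₗ[R] R ⧸ X)
    (hdFdeg : ∀ (i : ℕ) (t : ℤ), ∀ z ∈ ℱ (i + 1) t, dF i z ∈ ℱ i t)
    (hεdeg : ∀ t : ℤ, ∀ z ∈ ℱ 0 t, ε z ∈ (𝒜 t).map (Ideal.Quotient.mkₐ k X).toLinearMap)
    (hεsurj : Function.Surjective ε)
    (hex0 : LinearMap.range (dF 0) = LinearMap.ker ε)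
    (hex : ∀ i : ℕ, LinearMap.range (dF (i + 1)) = LinearMap.ker (dF i)) (n : ℕ) (j : ℤ) :
    ∑ i ∈ Finset.range (n + 1), (-1 : ℤ) ^ i * torPieceDim k F ℱ dF ⊥ i j = fpH 𝒜 X j := by
  have hbot : ∀ t, ∀ r ∈ (⊥ : Ideal R), fpr 𝒜 t r ∈ (⊥ : Ideal R) := by
    intro t r hr
    rw [Ideal.mem_bot] at hr ⊢
    rw [hr, map_zero]
  rw [Finset.sum_range_succ']
  have hz : ∀ i, torPieceDim k F ℱ dF ⊥ (i + 1) j = 0 := by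
    intro i
    apply fp_tor_zero F ℱ dF hex
    simp
  simp only [hz, Nat.cast_zero, mul_zero, Finset.sum_const_zero, zero_add, pow_zero, one_mul]
  rw [fp_tor_eq F ℱ hFfin dF hex, fp_bd_eq' 𝒜 F ℱ hℱ dF hdFdeg ⊥ hbot]
  have hid : ∀ V : Submodule k (F 0), Module.finrank k (V.map
      (((⊥ : Ideal R) • ⊤ : Submodule R (F 0)).mkQ.restrictScalars k)) = Module.finrank k V := by
    intro V
    rw [fp_finrank_map_congr V _ LinearMap.id, Submodule.map_id]
    intro v _
    simp
  rw [hid]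
  change ((Module.finrank k ((ℱ 0 j).map
      (((⊥ : Ideal R) • ⊤ : Submodule R (F 0)).mkQ.restrictScalars k)) : ℕ) : ℤ) - _ = _
  rw [hid]
  have hf := hFfin 0 j
  have h1 := fp_rank_nullity (ℱ 0 j) (ε.restrictScalars k)
  rw [LinearMap.ker_restrictScalars, ← hex0] at h1
  have hcomp : ∀ (z : F 0) (t : ℤ) (w : R), ε z = Ideal.Quotient.mk X w →
      ε (fpr (ℱ 0) t z) = Ideal.Quotient.mk X (fpr 𝒜 t w) := by
    intro z t
    refine fpr_induction (ℱ 0) (P := fun z => ∀ w : R, ε z = Ideal.Quotient.mk X w →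
      ε (fpr (ℱ 0) t z) = Ideal.Quotient.mk X (fpr 𝒜 t w)) z ?_ ?_ ?_
    · intro w hw
      rw [map_zero] at hw
      have := hX t w (Ideal.Quotient.eq_zero_iff_mem.1 hw.symm)
      rw [Ideal.Quotient.eq_zero_iff_mem.2 this]; simp
    · intro a b ha hb w hw
      obtain ⟨w1, hw1⟩ := Ideal.Quotient.mk_surjective (ε a)
      obtain ⟨w2, hw2⟩ := Ideal.Quotient.mk_surjective (ε b)
      have h3 : w - (w1 + w2) ∈ X := by
        rw [← Ideal.Quotient.eq, map_add, hw1, hw2, ← hw, map_add]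
      have h4 := hX t _ h3
      rw [map_sub, map_add, ← Ideal.Quotient.eq, map_add] at h4
      rw [map_add, map_add, ha w1 hw1.symm, hb w2 hw2.symm, h4]
    · intro s a ha w hw
      obtain ⟨w', hw', hww⟩ := hεdeg s a ha
      have hww2 : Ideal.Quotient.mk X w' = ε a := hww
      have h3 : w - w' ∈ X := by rw [← Ideal.Quotient.eq, ← hw, hww2]
      have h4 := hX t _ h3
      rw [map_sub, ← Ideal.Quotient.eq] at h4
      rw [h4]
      by_cases hst : s = t
      · subst hst
        rw [fpr_of_mem 𝒜 hw', fpr_of_mem (ℱ 0) ha, hww2]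
      · rw [fpr_of_ne 𝒜 hw' hst, fpr_of_ne (ℱ 0) ha hst]; simp
  have h2 : (ℱ 0 j).map (ε.restrictScalars k) =
      (𝒜 j).map (Ideal.Quotient.mkₐ k X).toLinearMap := by
    apply le_antisymm
    · rintro _ ⟨z, hz, rfl⟩
      exact hεdeg j z hz
    · rintro _ ⟨w, hw, rfl⟩
      obtain ⟨z, hz⟩ := hεsurj (Ideal.Quotient.mk X w)
      refine ⟨fpr (ℱ 0) j z, fpr_mem _ _ _, ?_⟩
      have := hcomp z j w hz
      rw [fpr_of_mem 𝒜 hw] at this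
      exact this
  have h3 : Module.finrank k ((𝒜 j).map (Ideal.Quotient.mkₐ k X).toLinearMap) = fpH 𝒜 X j := by
    unfold fpH
    apply fp_finrank_map_congr
    intro v _
    change Ideal.Quotient.mk X v = 0 ↔ Submodule.Quotient.mk v = 0
    rw [Ideal.Quotient.eq_zero_iff_mem, Submodule.Quotient.mk_eq_zero]
    simp
  rw [h2, h3] at h1
  rw [h1]
  push_cast
  ring

lemma fp_exists_Q' [Nontrivial R] (h𝒜neg : ∀ t : ℤ, t < 0 → 𝒜 t = ⊥)
    (hfin : ∀ j, FiniteDimensional k (𝒜 j)) (d : ℕ) (x : Fin d → R) (δ : Fin d → ℕ)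
    (hxhom : ∀ j, x j ∈ 𝒜 (δ j)) (hreg : RingTheory.Sequence.IsRegular R (List.ofFn x)) :
    ∀ m, ∀ hm : m ≤ d, (∀ t, ∀ r ∈ fpX x m, fpr 𝒜 t r ∈ fpX x m) ∧
      ∃ Q : ℤ →₀ ℤ, (∀ j, fpConv (fun j => (fpH 𝒜 ⊥ j : ℤ)) Q j = fpH 𝒜 (fpX x m) j) ∧
      ∀ E : ℤ → ℂ, (∀ a b, E (a + b) = E a * E b) → E 0 = 1 →
        fpEv E Q = ∏ i : Fin m, (1 - E (δ (Fin.castLE hm i))) := by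
  intro m
  induction m with
  | zero =>
    intro hm
    rw [fpX_zero]
    refine ⟨?_, Finsupp.single 0 1, ?_, ?_⟩
    · intro t r hr
      rw [Ideal.mem_bot] at hr ⊢
      rw [hr, map_zero]
    · intro j; rw [fpConv_single]; simp
    · intro E _ h0
      simp [fpEv, Finsupp.linearCombination_single, h0]
  | succ m ih =>
    intro hm
    obtain ⟨hX, Q, hQ, hE⟩ := ih (by omega)
    have hu : fpu x m ∈ 𝒜 (δ ⟨m, hm⟩) := by
      unfold fpu
      rw [dif_pos (show m < d from hm)]
      exact hxhom _
    obtain ⟨h1, h2⟩ := fpH_step 𝒜 hfin (fpX x m) (fpX x (m + 1)) (fpu x m) (δ ⟨m, hm⟩) hu hX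
      (fpX_succ x m hm) (fpX_reg x hreg m hm)
    refine ⟨h1, Q - fpSh (δ ⟨m, hm⟩) Q, ?_, ?_⟩
    · intro j
      rw [map_sub, Pi.sub_apply, fpConv_sh, hQ, hQ, h2]
    · intro E hEm h0
      rw [map_sub, fpEv_sh E hEm, hE E hEm h0, Fin.prod_univ_castSucc]
      have : ∀ i : Fin m, Fin.castLE hm i.castSucc = Fin.castLE (by omega) i := fun i => rfl
      simp only [this]
      have : Fin.castLE hm (Fin.last m) = ⟨m, hm⟩ := rfl
      rw [this]
      ring

end Res

lemma fp_lim (p : ℕ) (hp : 1 < p) (c : ℂ) :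
    Tendsto (fun n : ℕ => (p : ℂ) ^ n * (1 - Complex.exp (-c / (p : ℂ) ^ n))) atTop (nhds c) := by
  by_cases hc : c = 0
  · simp [hc]
  have h1 : HasDerivAt (fun z : ℂ => Complex.exp (-c * z)) (-c) 0 := by
    have := ((hasDerivAt_id (0 : ℂ)).const_mul (-c)).cexp
    simpa using this
  have hp0 : (p : ℂ) ≠ 0 := by
    have : p ≠ 0 := by omega
    exact_mod_cast this
  have h2 := h1.tendsto_slope_zero
  have h3 : Tendsto (fun n : ℕ => ((p : ℂ) ^ n)⁻¹) atTop (nhdsWithin 0 {0}ᶜ) := by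
    rw [tendsto_nhdsWithin_iff]
    refine ⟨?_, Eventually.of_forall fun n => ?_⟩
    · have h4 : Tendsto (fun n : ℕ => ((p : ℂ)⁻¹) ^ n) atTop (nhds 0) := by
        apply tendsto_pow_atTop_nhds_zero_of_norm_lt_one
        rw [norm_inv, Complex.norm_natCast]
        exact inv_lt_one_of_one_lt₀ (by exact_mod_cast hp)
      simpa using h4
    · simp [hp0]
  have h5 := (h2.comp h3).neg
  rw [neg_neg] at h5
  refine h5.congr fun n => ?_
  simp only [Function.comp, zero_add, mul_zero, Complex.exp_zero, inv_inv, smul_eq_mul]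
  rw [div_eq_mul_inv]
  ring

section Fin
variable {k R : Type} [Field k] [CommRing R] [Algebra k R]
    (𝒜 : ℤ → Submodule k R) [GradedAlgebra 𝒜]
    (F : ℕ → Type) [∀ i, AddCommGroup (F i)] [∀ i, Module R (F i)]
    [∀ i, Module k (F i)] [∀ i, IsScalarTower k R (F i)]
    (ℱ : ∀ i, ℤ → Submodule k (F i)) [∀ i, DirectSum.Decomposition (ℱ i)]

lemma fp_chi (dF : ∀ i, F (i + 1) →ₗ[R] F i) (J : Ideal R) (N : ℕ)
    (hz : ∀ i, N ≤ i → ∀ j, torPieceDim k F ℱ dF J i j = 0)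
    (hsupp : (Function.support (fpH 𝒜 J)).Finite)
    (hC : ∀ i, ∃ (r : ℕ) (a : Fin r → ℤ), ∀ j,
      torPieceDim k F ℱ dF J i j ≤ ∑ l, fpH 𝒜 J (j - a l))
    (Q : ℤ →₀ ℤ) (hQ : ∀ j, ∑ i ∈ Finset.range N, (-1 : ℤ) ^ i * torPieceDim k F ℱ dF J i j =
        fpConv (fun j => (fpH 𝒜 J j : ℤ)) Q j)
    (E : ℤ → ℂ) (hE : ∀ a b, E (a + b) = E a * E b) :
    ∑' i : ℕ, (-1 : ℂ) ^ i * ∑' j : ℤ, (torPieceDim k F ℱ dF J i j : ℂ) * E j =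
      fpEv E Q * ∑' j : ℤ, (fpH 𝒜 J j : ℂ) * E j := by
  have hsum : ∀ i, Summable fun j : ℤ => (torPieceDim k F ℱ dF J i j : ℂ) * E j := by
    intro i
    obtain ⟨r, a, hr⟩ := hC i
    have hfin : (⋃ l, (fun j => j - a l) ⁻¹' (Function.support (fpH 𝒜 J))).Finite :=
      Set.finite_iUnion fun l => hsupp.preimage (sub_left_injective.injOn)
    apply summable_of_hasFiniteSupport
    refine hfin.subset ?_
    intro j hj
    by_contra hj'
    apply hj
    simp only [Set.mem_iUnion, Set.mem_preimage, Function.mem_support, not_exists, not_not] at hj'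
    have := hr j
    simp only [hj', Finset.sum_const_zero, Nat.le_zero] at this
    simp [this]
  rw [tsum_eq_sum (s := Finset.range N)]
  · simp_rw [← tsum_mul_left]
    rw [← Summable.tsum_finsetSum]
    · have hS : Summable fun j : ℤ => ((fpH 𝒜 J j : ℤ) : ℂ) * E j := by
        apply summable_of_hasFiniteSupport
        refine hsupp.subset ?_
        intro j hj hj'
        apply hj
        simp [hj']
      have h1 := (fpConv_hasSum (fun j => (fpH 𝒜 J j : ℤ)) E hE _ hS.hasSum Q).tsum_eq
      simp only [Int.cast_natCast] at h1
      rw [tsum_mul_left, ← h1]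
      congr 1
      funext j
      rw [← hQ]
      push_cast
      rw [Finset.sum_mul]
      refine Finset.sum_congr rfl fun i _ => ?_
      ring
    · intro i _
      exact (hsum i).mul_left _
  · intro i hi
    have : N ≤ i := by simpa using hi
    simp [hz i this]

end Fin

/-- **Frobenius–Poincaré functions of Cohen–Macaulay graded rings via Koszul/Tor Euler
characteristics.**  Let `R` be Cohen–Macaulay (equivalently, the homogeneous system of
parameters `x_1, …, x_d` is a regular sequence) of dimension `d`, with `deg x_i = δ_i`,
and let `χ_n(t) = Σ_i (-1)^i H_{Tor_i^R(R/(x), R/I^{[pⁿ]})}(t)`, the Tor groups being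
computed from a graded free resolution `F_•` of `R/(x_1,…,x_d)`.  Then for `y ≠ 0`,
`F(R,R,I)(y) = (δ_1⋯δ_d (iy)^d)⁻¹ · lim_n χ_n(e^{-iy/pⁿ})`. -/
theorem frobenius_poincare_cohen_macaulay
    (k R : Type) [Field k] [CommRing R] [Algebra k R] [Algebra.FiniteType k R]
    (p : ℕ) (hp : p.Prime) [CharP R p]
    (𝒜 : ℤ → Submodule k R) [GradedAlgebra 𝒜]
    (h𝒜neg : ∀ t : ℤ, t < 0 → 𝒜 t = ⊥)
    (h𝒜zero : ∀ x ∈ 𝒜 0, ∃ c : k, algebraMap k R c = x)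
    (d : ℕ) (hd : ringKrullDim R = d)
    (I : Ideal R) (hI : Ideal.IsHomogeneous 𝒜 I) (hIfl : IsFiniteLength R (R ⧸ I))
    -- a homogeneous system of parameters, which is a regular sequence (Cohen–Macaulayness)
    (x : Fin d → R) (δ : Fin d → ℕ) (hδpos : ∀ j, 0 < δ j)
    (hxhom : ∀ j, x j ∈ 𝒜 (δ j))
    (hxfl : IsFiniteLength R (R ⧸ Ideal.span (Set.range x)))
    (hreg : RingTheory.Sequence.IsRegular R (List.ofFn x))
    -- a graded free resolution `F_• → R/(x_1,…,x_d)`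
    (F : ℕ → Type) [∀ i, AddCommGroup (F i)] [∀ i, Module R (F i)]
    [∀ i, Module k (F i)] [∀ i, IsScalarTower k R (F i)]
    [∀ i, Module.Free R (F i)] [∀ i, Module.Finite R (F i)]
    (ℱ : ∀ i, ℤ → Submodule k (F i)) [∀ i, DirectSum.Decomposition (ℱ i)]
    (hℱ : ∀ (i : ℕ) (a b : ℤ), ∀ r ∈ 𝒜 a, ∀ z ∈ ℱ i b, r • z ∈ ℱ i (a + b))
    (dF : ∀ i, F (i + 1) →ₗ[R] F i)
    (ε : F 0 →ₗ[R] R ⧸ Ideal.span (Set.range x))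
    (hdFdeg : ∀ (i : ℕ) (t : ℤ), ∀ z ∈ ℱ (i + 1) t, dF i z ∈ ℱ i t)
    (hεdeg : ∀ t : ℤ, ∀ z ∈ ℱ 0 t,
      ε z ∈ (𝒜 t).map (Ideal.Quotient.mkₐ k (Ideal.span (Set.range x))).toLinearMap)
    (hεsurj : Function.Surjective ε)
    (hex0 : LinearMap.range (dF 0) = LinearMap.ker ε)
    (hex : ∀ i : ℕ, LinearMap.range (dF (i + 1)) = LinearMap.ker (dF i))
    (y : ℂ) (hy : y ≠ 0)
    (L : ℂ) (hL : Tendsto (fun n : ℕ => FnGen k 𝒜 I p d n y) atTop (nhds L)) :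
    ∃ χL : ℂ,
      Tendsto (fun n : ℕ =>
          ∑' i : ℕ, (-1 : ℂ) ^ i *
            ∑' j : ℤ, (torPieceDim k F ℱ dF (bracketPow I (p ^ n)) i j : ℂ) *
              Complex.exp (-Complex.I * y * (j : ℂ) / (p : ℂ) ^ n))
        atTop (nhds χL) ∧
      L = (1 / ((∏ j : Fin d, (δ j : ℂ)) * (Complex.I * y) ^ d)) * χL := by
  have hnoeth : IsNoetherianRing R := Algebra.FiniteType.isNoetherianRing k R
  have hnt : Nontrivial R := by
    by_contra h
    rw [not_nontrivial_iff_subsingleton] at h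
    rw [ringKrullDim_eq_bot_of_subsingleton] at hd
    simp at hd
  have hfin : ∀ j, FiniteDimensional k (𝒜 j) :=
    fp_A_fin 𝒜 h𝒜neg x δ hδpos hxhom (fp_fd _ _ hxfl Ideal.le_radical)
  have hpd := fp_pd_chain d (fpX x) (fpu x) (fpX_zero x) (fun m hm => fpX_succ x m hm)
    (fun m hm => fpX_reg x hreg m hm) d le_rfl
  rw [fpX_last] at hpd
  have hproj := fp_proj_range d hpd F dF ε hεsurj hex0 hex
  obtain ⟨Q, hQ⟩ := fp_exists_Q 𝒜 F ℱ h𝒜neg h𝒜zero hfin hℱ dF hdFdeg hex d hproj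
  obtain ⟨hXd, Q', hQ', hE'⟩ := fp_exists_Q' 𝒜 h𝒜neg hfin d x δ hxhom hreg d le_rfl
  rw [fpX_last] at hXd hQ'
  choose r a hFfin hC using fp_bases 𝒜 F ℱ h𝒜neg h𝒜zero hfin hℱ
  have hbot : ∀ t, ∀ r ∈ (⊥ : Ideal R), fpr 𝒜 t r ∈ (⊥ : Ideal R) := by
    intro t r hr
    rw [Ideal.mem_bot] at hr ⊢
    rw [hr, map_zero]
  have hQQ : Q = Q' := by
    rw [← sub_eq_zero]
    refine fpConv_inj (fun j => (fpH 𝒜 ⊥ j : ℤ)) ?_ ?_ _ ?_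
    · intro j hj
      have : fpH 𝒜 ⊥ j = 0 := fpH_zero 𝒜 (by rw [h𝒜neg j hj]; exact bot_le)
      simp [this]
    · have h1 := fpH_add 𝒜 hfin ⊥ 0
      have h2 : (𝒜 0 ⊓ (⊥ : Ideal R).restrictScalars k : Submodule k R) = ⊥ := by
        simp
      rw [h2, finrank_bot, add_zero] at h1
      have h3 : Nontrivial (𝒜 0) :=
        ⟨⟨⟨1, SetLike.one_mem_graded 𝒜⟩, 0, fun h => one_ne_zero (congrArg Subtype.val h)⟩⟩
      have := hfin 0
      have h4 : 0 < Module.finrank k (𝒜 0) := Module.finrank_pos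
      simp only [ne_eq, Nat.cast_eq_zero]
      omega
    · funext j
      rw [map_sub, Pi.sub_apply, hQ', ← hQ ⊥ hbot,
        fp_tor_bot 𝒜 F ℱ hFfin hℱ dF _ hXd ε hdFdeg hεdeg hεsurj hex0 hex]
      simp
  have hp0 : (p : ℂ) ≠ 0 := by exact_mod_cast hp.ne_zero
  have hchi : ∀ n : ℕ, (∑' i : ℕ, (-1 : ℂ) ^ i *
            ∑' j : ℤ, (torPieceDim k F ℱ dF (bracketPow I (p ^ n)) i j : ℂ) *
              Complex.exp (-Complex.I * y * (j : ℂ) / (p : ℂ) ^ n)) =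
      (∏ j : Fin d, ((p : ℂ) ^ n * (1 - Complex.exp (-(Complex.I * y * δ j) / (p : ℂ) ^ n)))) *
        FnGen k 𝒜 I p d n y := by
    intro n
    have hJ := fp_bracket_hom 𝒜 p hp I hI n
    have hE : ∀ a b : ℤ, Complex.exp (-Complex.I * y * ((a + b : ℤ) : ℂ) / (p : ℂ) ^ n) =
        Complex.exp (-Complex.I * y * (a : ℂ) / (p : ℂ) ^ n) *
        Complex.exp (-Complex.I * y * (b : ℂ) / (p : ℂ) ^ n) := by
      intro a b
      rw [← Complex.exp_add]
      congr 1
      push_cast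
      ring
    rw [fp_chi 𝒜 F ℱ dF (bracketPow I (p ^ n)) (d + 1 + 1) ?_
      (fpH_support 𝒜 _ hJ (fp_fd I _ hIfl (fp_bracket_rad I _))) ?_ Q (hQ _ hJ)
      (fun j : ℤ => Complex.exp (-Complex.I * y * (j : ℂ) / (p : ℂ) ^ n)) hE]
    · rw [hQQ, hE' _ hE (by simp)]
      unfold FnGen
      rw [Finset.prod_mul_distrib, Finset.prod_const, Finset.card_univ, Fintype.card_fin]
      have h1 : ((p : ℂ) ^ n) ^ d * (1 / (p : ℂ) ^ n) ^ d = 1 := by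
        rw [← mul_pow, mul_one_div_cancel (pow_ne_zero _ hp0), one_pow]
      have h2 : ∏ i : Fin d, (1 - Complex.exp (-Complex.I * y *
          (((δ (Fin.castLE le_rfl i) : ℕ) : ℤ) : ℂ) / (p : ℂ) ^ n)) =
          ∏ j : Fin d, (1 - Complex.exp (-(Complex.I * y * δ j) / (p : ℂ) ^ n)) := by
        refine Finset.prod_congr rfl fun i _ => ?_
        simp only [Fin.castLE_rfl, id_eq, Int.cast_natCast, neg_mul]
      rw [h2]
      change _ * (∑' j : ℤ, (fpH 𝒜 (bracketPow I (p ^ n)) j : ℂ) * _) =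
        _ * (_ * (∑' j : ℤ, (fpH 𝒜 (bracketPow I (p ^ n)) j : ℂ) * _))
      linear_combination (-(∏ j : Fin d, (1 - Complex.exp (-(Complex.I * y * δ j) / (p : ℂ) ^ n))) *
        (∑' j : ℤ, (fpH 𝒜 (bracketPow I (p ^ n)) j : ℂ) *
          Complex.exp (-Complex.I * y * (j : ℂ) / (p : ℂ) ^ n))) * h1
    · intro i hi j
      obtain ⟨i', rfl⟩ : ∃ i', i = i' + 1 + 1 := ⟨i - 2, by omega⟩
      apply fp_tor_zero F ℱ dF hex
      rw [hex]
      exact fp_summand (dF i') (hproj i' (by omega)) _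
    · intro i
      exact ⟨r i, a i, fun j => by rw [← hC i]; exact fp_tor_le F ℱ hFfin dF _ i j⟩
  refine ⟨(∏ j : Fin d, (Complex.I * y * δ j)) * L, ?_, ?_⟩
  · simp_rw [hchi]
    exact (tendsto_finsetProd _ fun j _ => fp_lim p hp.one_lt (Complex.I * y * δ j)).mul hL
  · have h1 : ∏ j : Fin d, (Complex.I * y * (δ j : ℂ)) =
        (∏ j : Fin d, (δ j : ℂ)) * (Complex.I * y) ^ d := by
      rw [Finset.prod_mul_distrib, Finset.prod_const, Finset.card_univ, Fintype.card_fin, mul_comm]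
    have h2 : (∏ j : Fin d, (δ j : ℂ)) * (Complex.I * y) ^ d ≠ 0 := by
      refine mul_ne_zero (Finset.prod_ne_zero_iff.2 fun j _ => ?_)
        (pow_ne_zero _ (mul_ne_zero Complex.I_ne_zero hy))
      exact_mod_cast (hδpos j).ne'
    rw [h1, ← mul_assoc, one_div, inv_mul_cancel₀ h2, one_mul]

end
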